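/- Let M be a Coxeter matrix on a finite set S with at least 3 elements such that for all s ≠ t either M s t = 0 or M s t ≥ 3 (large type), such that there are no three pairwise distinct s, t, u ∈ S with M s t = M t u = M s u = 3 (hyperbolic type), and such that the presentation graph Γ of M admits a twistless hierarchy terminating in twistless stars. Then the Artin group A[M] has property R_∞. -/

import Mathlib

/-- Two elements `g h` of a group `G` are `φ`-twisted conjugate if there is `x : G`
with `h = x * g * (φ x)⁻¹`. -/
def TwistedConj {G : Type*} [Group G] (φ : G ≃* G) (g h : G) : Prop :=
  ∃ x : G, h = x * g * (φ x)⁻¹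

/-- `R(φ) = ∞`: the set of `φ`-twisted conjugacy classes is infinite. -/
def ReidemeisterInfinite {G : Type*} [Group G] (φ : G ≃* G) : Prop :=
  Infinite (Quot (TwistedConj φ))

/-- A group `G` has property `R_∞` if `R(φ) = ∞` for every automorphism `φ` of `G`. -/
def PropertyRInfinity (G : Type*) [Group G] : Prop :=
  ∀ φ : G ≃* G, ReidemeisterInfinite φ

/-- `M` is a Coxeter matrix on `S`: symmetric, with `M s s = 1` and `M s t ≠ 1` off the
diagonal (the value `0` encodes the label `∞`). -/
def IsCoxeterMatrix {S : Type*} (M : S → S → ℕ) : Prop :=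
  (∀ s t, M s t = M t s) ∧ (∀ s, M s s = 1) ∧ (∀ s t, s ≠ t → M s t ≠ 1)

/-- The alternating word `Π(s,t,m) = s t s t ⋯` of length `m`, as an element
of the free group. -/
def altWord {S : Type*} (s t : S) (m : ℕ) : FreeGroup S :=
  ((List.range m).map (fun k => if k % 2 = 0 then FreeGroup.of s else FreeGroup.of t)).prod

/-- The Artin relations associated with a Coxeter matrix `M`: for every pair `s ≠ t`
with `M s t = m ≥ 2` the relation `Π(s,t,m) = Π(t,s,m)`; pairs with `M s t = 0`
contribute no relation. -/
def artinRels {S : Type*} (M : S → S → ℕ) : Set (FreeGroup S) :=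
  { r | ∃ s t : S, s ≠ t ∧ 2 ≤ M s t ∧
      r = altWord s t (M s t) * (altWord t s (M s t))⁻¹ }

/-- The Artin group of the Coxeter matrix `M`. -/
abbrev ArtinGroup {S : Type*} (M : S → S → ℕ) : Type _ := PresentedGroup (artinRels M)

/-- The image `t_s` in the Artin group of the standard generator `s`. -/
abbrev artinGen {S : Type*} (M : S → S → ℕ) (s : S) : ArtinGroup M :=
  PresentedGroup.of (rels := artinRels M) s

/-- The presentation graph of a Coxeter matrix `M`: vertices are the elements of `S`,
and `s ≠ t` are adjacent if and only if `M s t ≠ 0`. -/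
def presGraph {S : Type*} (M : S → S → ℕ) : SimpleGraph S :=
  SimpleGraph.fromRel (fun s t => M s t ≠ 0)

/-- A graph is twistless if it is connected, has no cut-vertex (removing any single
vertex leaves a connected graph) and no separating edge (removing the two endpoints of
any edge, together with all incident edges, leaves a connected graph). -/
def Twistless {V : Type*} (G : SimpleGraph V) : Prop :=
  G.Connected ∧
  (∀ v : V, (G.induce {u : V | u ≠ v}).Connected) ∧
  (∀ s t : V, G.Adj s t → (G.induce {u : V | u ≠ s ∧ u ≠ t}).Connected)

/-- A graph is a twistless star if it is twistless and some vertex is adjacent to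
every other vertex. -/
def TwistlessStar {V : Type*} (G : SimpleGraph V) : Prop :=
  Twistless G ∧ ∃ v : V, ∀ u : V, u ≠ v → G.Adj v u

/-- The induced subgraph of `G` on a vertex set `U` admits a twistless hierarchy
terminating in twistless stars: either it is itself a twistless star, or it has a
twistless admissible decomposition into two proper induced subgraphs each of which
admits such a hierarchy. -/
inductive AdmitsTwistlessHierarchy {V : Type*} (G : SimpleGraph V) : Set V → Prop where
  | star (U : Set V) (h : TwistlessStar (G.induce U)) : AdmitsTwistlessHierarchy G U
  | decomp (U V₁ V₂ : Set V)
      (hunion : V₁ ∪ V₂ = U) (h1 : V₁ ≠ U) (h2 : V₂ ≠ U)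
      (hedges : ∀ s t : V, s ∈ U → t ∈ U → G.Adj s t →
        (s ∈ V₁ ∧ t ∈ V₁) ∨ (s ∈ V₂ ∧ t ∈ V₂))
      (hne : (V₁ ∩ V₂).Nonempty)
      (hvertex : ¬ ∃ v : V, V₁ ∩ V₂ = {v})
      (hedge : ¬ ∃ s t : V, G.Adj s t ∧ V₁ ∩ V₂ = {s, t})
      (hh1 : AdmitsTwistlessHierarchy G V₁) (hh2 : AdmitsTwistlessHierarchy G V₂) :
      AdmitsTwistlessHierarchy G U

namespace RInf

theorem twistedConj_equiv {G : Type*} [Group G] (φ : G ≃* G) : Equivalence (TwistedConj φ) where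
  refl g := ⟨1, by simp⟩
  symm := by
    rintro g h ⟨x, rfl⟩
    exact ⟨x⁻¹, by simp [mul_assoc]⟩
  trans := by
    rintro g h k ⟨x, rfl⟩ ⟨y, rfl⟩
    exact ⟨y * x, by simp [mul_assoc]⟩

theorem quot_eq {G : Type*} [Group G] (φ : G ≃* G) (g h : G) :
    Quot.mk (TwistedConj φ) g = Quot.mk (TwistedConj φ) h ↔ TwistedConj φ g h :=
  (twistedConj_equiv φ).quot_mk_eq_iff g h

theorem finite_hom (G X : Type*) [Group G] [Group X] [Group.FG G] [Finite X] :
    Finite (G →* X) := by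
  obtain ⟨T, hT⟩ := Group.fg_def.1 (inferInstance : Group.FG G)
  apply Finite.of_injective (fun (f : G →* X) (t : T) => f t)
  intro f g hfg
  apply MonoidHom.eq_of_eqOn_dense hT
  intro t ht
  exact congrFun hfg ⟨t, ht⟩

/-- Intersection of the kernels of all homomorphisms to `X`. -/
def charK (G X : Type*) [Group G] [Group X] : Subgroup G := ⨅ f : G →* X, f.ker

theorem mem_charK {G X : Type*} [Group G] [Group X] {g : G} :
    g ∈ charK G X ↔ ∀ f : G →* X, f g = 1 := by
  simp [charK, Subgroup.mem_iInf, MonoidHom.mem_ker]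

theorem charK_finiteIndex (G X : Type*) [Group G] [Group X] [Group.FG G] [Finite X] :
    (charK G X).FiniteIndex := by
  have := finite_hom G X
  apply Subgroup.finiteIndex_iInf
  intro f
  infer_instance

theorem charK_inv {G X : Type*} [Group G] [Group X] (φ : G ≃* G) (g : G) :
    φ g ∈ charK G X ↔ g ∈ charK G X := by
  simp only [mem_charK]
  constructor
  · intro h f
    simpa using h (f.comp φ.symm.toMonoidHom)
  · intro h f
    exact h (f.comp φ.toMonoidHom)

/-- Restriction of an automorphism to an invariant subgroup. -/
def restrictAut {G : Type*} [Group G] (φ : G ≃* G) (K : Subgroup G)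
    (h : ∀ g, φ g ∈ K ↔ g ∈ K) : K ≃* K where
  toFun k := ⟨φ k, (h k).2 k.2⟩
  invFun k := ⟨φ.symm k, (h _).1 (by simp)⟩
  left_inv k := by ext; simp
  right_inv k := by ext; simp
  map_mul' a b := by ext; simp

theorem twisted_key {G : Type*} [Group G] (φ : G ≃* G) {a b w x y : G}
    (h1 : a = x * w * (φ x)⁻¹) (h2 : b = y * w * (φ y)⁻¹) :
    b = y * x⁻¹ * a * (φ (y * x⁻¹))⁻¹ := by
  subst h1 h2
  simp [mul_assoc]

theorem finite_restrict {G : Type*} [Group G] (φ : G ≃* G) (K : Subgroup G) [K.FiniteIndex]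
    (h : ∀ g, φ g ∈ K ↔ g ∈ K) [Finite (Quot (TwistedConj φ))] :
    Finite (Quot (TwistedConj (restrictAut φ K h))) := by
  have : Finite (G ⧸ K) := inferInstance
  have hx : ∀ g : G, ∃ x : G, g = x * (Quot.mk (TwistedConj φ) g).out * (φ x)⁻¹ := by
    intro g
    have : Quot.mk (TwistedConj φ) (Quot.mk (TwistedConj φ) g).out = Quot.mk (TwistedConj φ) g :=
      Quot.out_eq _
    exact (quot_eq φ _ _).1 this
  choose x hx using hx
  apply Finite.of_injective (fun q : Quot (TwistedConj (restrictAut φ K h)) =>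
    ((Quot.mk (TwistedConj φ) (q.out : G)), (QuotientGroup.mk (x q.out)⁻¹ : G ⧸ K)))
  intro q q' hqq
  simp only [Prod.mk.injEq] at hqq
  obtain ⟨h1, h2⟩ := hqq
  rw [← Quot.out_eq q, ← Quot.out_eq q', quot_eq]
  have h2' := QuotientGroup.eq.1 h2.symm
  simp only [inv_inv] at h2'
  refine ⟨⟨x q'.out * (x q.out)⁻¹, h2'⟩, ?_⟩
  apply Subtype.ext
  have e1 := hx q.out
  have e2 := hx q'.out
  rw [← h1] at e2
  exact twisted_key φ e1 e2
end RInf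

namespace RInf

/-- The twisted action as a multiplicative action. -/
@[reducible] def twistedAction {H : Type*} [Group H] (ψ : H ≃* H) : MulAction H H where
  smul x g := x * g * (ψ x)⁻¹
  one_smul g := by change 1 * g * (ψ 1)⁻¹ = g; simp
  mul_smul x y g := by
    change x * y * g * (ψ (x * y))⁻¹ = x * (y * g * (ψ y)⁻¹) * (ψ x)⁻¹
    simp [mul_assoc]

/-- The number of twisted classes is bounded below by the number of invariant classes. -/
theorem burnside_bound {H : Type*} [Group H] [Finite H] (ψ : H ≃* H) {ι : Type*} [Finite ι]
    (g : ι → H) (hinv : ∀ i, IsConj (g i) (ψ (g i)))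
    (hne : ∀ i j, IsConj (g i) (g j) → i = j) :
    Nat.card ι ≤ Nat.card (Quot (TwistedConj ψ)) := by
  classical
  have := Fintype.ofFinite H
  have := Fintype.ofFinite ι
  let act : MulAction H H := twistedAction ψ
  have : Fintype (MulAction.orbitRel.Quotient H H) := Fintype.ofFinite _
  have hb := MulAction.sum_card_fixedBy_eq_card_orbits_mul_card_group H H
  have hq : Nat.card (Quot (TwistedConj ψ)) = Fintype.card (MulAction.orbitRel.Quotient H H) := by
    rw [← Nat.card_eq_fintype_card]
    apply Nat.card_congr
    refine Quot.congrRight ?_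
    intro a b
    rw [MulAction.orbitRel_apply]
    constructor
    · intro h
      obtain ⟨x, hx⟩ := (twistedConj_equiv ψ).symm h
      exact ⟨x, hx.symm⟩
    · rintro ⟨x, hx⟩
      exact (twistedConj_equiv ψ).symm ⟨x, hx.symm⟩
  rw [hq, Nat.card_eq_fintype_card]
  have hpos : 0 < Fintype.card H := Fintype.card_pos
  apply Nat.le_of_mul_le_mul_right _ hpos
  rw [← hb]
  have hw : ∀ i, ∃ w, w * ψ (g i) * w⁻¹ = g i := fun i => isConj_iff.1 (hinv i).symm
  choose w hw using hw
  have hz : ∀ i x, ∃ z, IsConj (g i) x → z * g i * z⁻¹ = x := by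
    intro i x
    by_cases h : IsConj (g i) x
    · obtain ⟨z, hz⟩ := isConj_iff.1 h
      exact ⟨z, fun _ => hz⟩
    · exact ⟨1, fun h' => absurd h' h⟩
  choose z hz using hz
  rw [← Fintype.card_sigma, ← Fintype.card_prod]
  have hmem : ∀ p : ι × H, (p.2 * w p.1 * (ψ (z p.1 (p.2 * g p.1 * p.2⁻¹)))⁻¹) ∈
      MulAction.fixedBy H (p.2 * g p.1 * p.2⁻¹) := by
    rintro ⟨i, h⟩
    have hzz := hz i (h * g i * h⁻¹) (isConj_iff.2 ⟨h, rfl⟩)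
    have hww := hw i
    dsimp only
    set x := h * g i * h⁻¹ with hx
    set y := z i x
    change x * (h * w i * (ψ y)⁻¹) * (ψ x)⁻¹ = h * w i * (ψ y)⁻¹
    have e : ψ x = ψ y * ψ (g i) * (ψ y)⁻¹ := by rw [← hzz]; simp
    have e2 : ψ (g i) = (w i)⁻¹ * g i * w i := by
      conv_rhs => rw [← hww]
      simp only [mul_assoc, inv_mul_cancel_left, inv_mul_cancel, mul_one]
    rw [e, e2, hx]
    group
  apply Fintype.card_le_of_injective (fun p : ι × H =>
    (⟨p.2 * g p.1 * p.2⁻¹, ⟨_, hmem p⟩⟩ : Σ x : H, MulAction.fixedBy H x))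
  rintro ⟨i, h⟩ ⟨j, k⟩ hh
  simp only [Sigma.mk.injEq] at hh
  obtain ⟨h1, h2⟩ := hh
  have hij : i = j := hne i j
    ((isConj_iff.2 ⟨h, rfl⟩ : IsConj (g i) (h * g i * h⁻¹)).trans
      (h1 ▸ (isConj_iff.2 ⟨k, rfl⟩ : IsConj (g j) (k * g j * k⁻¹)).symm))
  subst hij
  have h3 := (Subtype.heq_iff_coe_eq (by intro x; rw [h1])).1 h2
  dsimp only at h3
  rw [h1] at h3
  simpa using h3

end RInf

namespace RInf

/-- Alternating groups on `Fin n`. -/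
abbrev Alt (n : ℕ) := alternatingGroup (Fin n)

theorem alt_conj {p : ℕ} (hp : p.Prime) (h5 : 5 ≤ p) (a b : Alt (p + 2))
    (ha : orderOf a = p) (hb : orderOf b = p) : IsConj a b := by
  have key : ∀ c : Alt (p + 2), orderOf c = p → (c : Equiv.Perm (Fin (p+2))).cycleType = {p} := by
    intro c hc
    have hc' : orderOf (c : Equiv.Perm (Fin (p + 2))) = p := by
      exact (Subgroup.orderOf_coe c).trans hc
    obtain ⟨n, hn⟩ := Equiv.Perm.cycleType_prime_order (σ := (c : Equiv.Perm (Fin (p+2))))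
      (by rw [hc']; exact hp)
    have hs := Equiv.Perm.sum_cycleType (c : Equiv.Perm (Fin (p+2)))
    have hle : (c : Equiv.Perm (Fin (p+2))).support.card ≤ p + 2 := by
      simpa using Finset.card_le_univ (c : Equiv.Perm (Fin (p+2))).support
    rw [hn, hc'] at hs
    simp only [Multiset.sum_replicate, smul_eq_mul] at hs
    have : n = 0 := by
      rcases Nat.eq_zero_or_pos n with h | h
      · exact h
      · have : 2 * p ≤ (n + 1) * p := Nat.mul_le_mul_right _ (by omega)
        omega
    subst this
    rw [hn, hc']; simp
  have hsupp : (a : Equiv.Perm (Fin (p+2))).support.card = p := by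
    rw [← Equiv.Perm.sum_cycleType, key a ha]; simp
  apply alternatingGroup.isConj_of
  · rw [Equiv.Perm.isConj_iff_cycleType_eq, key a ha, key b hb]
  · rw [hsupp]; simp

theorem alt_card (n : ℕ) (hn : 5 ≤ n) : 2 * Nat.card (Alt n) = n.factorial := by
  have : Nontrivial (Fin n) := Fin.nontrivial_iff_two_le.2 (by omega)
  have := two_mul_nat_card_alternatingGroup (α := Fin n)
  rw [this]
  rw [Nat.card_perm, Nat.card_fin]

theorem alt_card_inj {m n : ℕ} (hm : 5 ≤ m) (hn : 5 ≤ n)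
    (h : Nat.card (Alt m) = Nat.card (Alt n)) : m = n := by
  have h1 := alt_card m hm
  have h2 := alt_card n hn
  rw [h, h2] at h1
  exact (Nat.factorial_inj (by omega)).1 h1.symm

theorem alt_exists {p : ℕ} (hp : p.Prime) (h5 : 5 ≤ p) : ∃ a : Alt (p + 2), orderOf a = p := by
  have : Fact p.Prime := ⟨hp⟩
  apply exists_prime_orderOf_dvd_card' p
  have h := alt_card (p + 2) (by omega)
  have hd : p ∣ 2 * Nat.card (Alt (p + 2)) := by
    rw [h]; exact (Nat.dvd_factorial hp.pos (by omega))
  rcases hp.dvd_mul.1 hd with h | h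
  · have := Nat.le_of_dvd (by norm_num) h; omega
  · exact h

theorem alt_simple {n : ℕ} (hn : 5 ≤ n) : IsSimpleGroup (Alt n) :=
  alternatingGroup.isSimpleGroup (by simpa using hn)

/-- Normal subgroups of `E` are dichotomic with respect to maps onto simple groups. -/
theorem map_bot_or_top {E L : Type*} [Group E] [Group L] [IsSimpleGroup L] (π : E →* L)
    (hπ : Function.Surjective π) (A : Subgroup E) [A.Normal] :
    A ≤ π.ker ∨ A.map π = ⊤ := by
  have : (A.map π).Normal := Subgroup.Normal.map inferInstance π hπ
  rcases this.eq_bot_or_eq_top with h | h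
  · left
    exact (Subgroup.map_eq_bot_iff A).1 h
  · right; exact h

theorem prime_ker {E L : Type*} [Group E] [Group L] [IsSimpleGroup L] (π : E →* L)
    (hπ : Function.Surjective π) (hL : commutator L = ⊤) (A B : Subgroup E) [A.Normal] [B.Normal]
    (hAB : A ⊓ B ≤ π.ker) : A ≤ π.ker ∨ B ≤ π.ker := by
  rcases map_bot_or_top π hπ A with h | h
  · exact Or.inl h
  rcases map_bot_or_top π hπ B with h' | h'
  · exact Or.inr h'
  exfalso
  have h1 : ⁅A, B⁆ ≤ π.ker := (Subgroup.commutator_le_inf A B).trans hAB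
  have h2 : (⁅A, B⁆).map π = ⊥ := (Subgroup.map_eq_bot_iff _).2 h1
  rw [Subgroup.map_commutator, h, h'] at h2
  rw [commutator_def] at hL
  rw [hL] at h2
  exact top_ne_bot h2

/-- A normal subgroup with nonabelian simple quotient. -/
def GoodKer {E : Type*} [Group E] (N : Subgroup E) : Prop :=
  ∃ n, 5 ≤ n ∧ ∃ π : E →* Alt n, Function.Surjective π ∧ π.ker = N

theorem GoodKer.normal {E : Type*} [Group E] {N : Subgroup E} (h : GoodKer N) : N.Normal := by
  obtain ⟨n, hn, π, hπ, rfl⟩ := h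
  infer_instance

theorem alt_perfect {n : ℕ} (hn : 5 ≤ n) : commutator (Alt n) = ⊤ :=
  commutator_alternatingGroup_eq_top (by simpa using hn)

theorem GoodKer.eq_of_le {E : Type*} [Group E] {N N' : Subgroup E} (h : GoodKer N)
    (h' : GoodKer N') (hle : N ≤ N') : N = N' := by
  have := h'.normal
  obtain ⟨n, hn, π, hπ, rfl⟩ := h
  have := alt_simple hn
  rcases map_bot_or_top π hπ N' with h | h
  · exact le_antisymm hle h
  · exfalso
    have hN' : N' = ⊤ := by
      rw [eq_top_iff]
      intro x _
      have hx : π x ∈ N'.map π := by rw [h]; trivial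
      obtain ⟨y, hy, hyx⟩ := hx
      have : y⁻¹ * x ∈ π.ker := by simp [MonoidHom.mem_ker, hyx]
      have := N'.mul_mem hy (hle this)
      simpa using this
    obtain ⟨m, hm, ρ, hρ, rfl⟩ := h'
    have := alt_simple hm
    obtain ⟨y, hy⟩ := exists_ne (1 : Alt m)
    obtain ⟨x, rfl⟩ := hρ y
    exact hy (MonoidHom.mem_ker.1 (hN' ▸ Subgroup.mem_top x))

theorem inf_normal {E : Type*} [Group E] (T : Finset (Subgroup E)) (hT : ∀ N ∈ T, N.Normal) :
    (T.inf id).Normal := by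
  rw [Finset.inf_id_eq_sInf]
  constructor
  intro x hx g
  rw [Subgroup.mem_sInf] at hx ⊢
  intro K hK
  exact (hT K hK).conj_mem x (hx K hK) g

theorem goodKer_inf {E : Type*} [Group E] (T : Finset (Subgroup E)) (hT : ∀ N ∈ T, GoodKer N)
    (N : Subgroup E) (hN : GoodKer N) (h : T.inf id ≤ N) : N ∈ T := by
  classical
  induction T using Finset.induction_on with
  | empty =>
    exfalso
    obtain ⟨m, hm, ρ, hρ, rfl⟩ := hN
    have := alt_simple hm
    obtain ⟨y, hy⟩ := exists_ne (1 : Alt m)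
    obtain ⟨x, rfl⟩ := hρ y
    simp only [Finset.inf_empty] at h
    exact hy (MonoidHom.mem_ker.1 (h (Subgroup.mem_top x)))
  | insert N' T hN' ih =>
    have hinf : (T.inf id).Normal := by
      apply inf_normal
      intro K hK
      exact (hT K (Finset.mem_insert_of_mem hK)).normal
    have hn' := (hT N' (Finset.mem_insert_self _ _)).normal
    rw [Finset.inf_insert] at h
    have hor : N' ≤ N ∨ T.inf id ≤ N := by
      obtain ⟨m, hm, ρ, hρ, rfl⟩ := hN
      have := alt_simple hm
      exact prime_ker ρ hρ (alt_perfect hm) _ _ h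
    rcases hor with h1 | h1
    · rw [← (hT N' (Finset.mem_insert_self _ _)).eq_of_le hN h1]
      exact Finset.mem_insert_self _ _
    · exact Finset.mem_insert_of_mem (ih (fun K hK => hT K (Finset.mem_insert_of_mem hK)) h1)

/-- Chinese remainder theorem. -/
theorem crt {E : Type*} [Group E] (T : Finset (Subgroup E)) (hT : ∀ N ∈ T, GoodKer N)
    (τ : Subgroup E → E) : ∃ g : E, ∀ N ∈ T, (τ N)⁻¹ * g ∈ N := by
  classical
  induction T using Finset.induction_on with
  | empty => exact ⟨1, by simp⟩
  | insert N T hN ih =>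
    obtain ⟨g, hg⟩ := ih (fun K hK => hT K (Finset.mem_insert_of_mem hK))
    have hinf : (T.inf id).Normal := by
      apply inf_normal
      intro K hK
      exact (hT K (Finset.mem_insert_of_mem hK)).normal
    have hgN := hT N (Finset.mem_insert_self _ _)
    have hnot : ¬ T.inf id ≤ N := fun h =>
      hN (goodKer_inf T (fun K hK => hT K (Finset.mem_insert_of_mem hK)) N hgN h)
    have hk : ∃ k ∈ T.inf id, (τ N)⁻¹ * (g * k) ∈ N := by
      obtain ⟨m, hm, ρ, hρ, rfl⟩ := hgN
      have := alt_simple hm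
      rcases map_bot_or_top ρ hρ (T.inf id) with h | h
      · exact absurd h hnot
      · have : ρ (g⁻¹ * τ ρ.ker) ∈ (T.inf id).map ρ := by rw [h]; trivial
        obtain ⟨k, hk, hk'⟩ := this
        refine ⟨k, hk, ?_⟩
        rw [MonoidHom.mem_ker]
        simp [hk']
    obtain ⟨k, hk, hk'⟩ := hk
    refine ⟨g * k, ?_⟩
    intro K hK
    rcases Finset.mem_insert.1 hK with rfl | hK
    · exact hk'
    · rw [← mul_assoc]
      refine K.mul_mem (hg K hK) ?_
      exact (Finset.inf_le hK : T.inf id ≤ id K) hk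

end RInf

namespace RInf

theorem index_ker_alt {E : Type*} [Group E] {n : ℕ} (π : E →* Alt n)
    (hπ : Function.Surjective π) : π.ker.index = Nat.card (Alt n) := by
  rw [Subgroup.index_ker, MonoidHom.range_eq_top.2 hπ]
  exact Nat.card_congr Subgroup.topEquiv.toEquiv

theorem comap_ker {E L : Type*} [Group E] [Group L] (ψ : E ≃* E) (π : E →* L) :
    (π.comp ψ.toMonoidHom).ker = π.ker.comap ψ.toMonoidHom := rfl

theorem reid_bound {E : Type*} [Group E] [Group.FG E] (ψ : E ≃* E)
    [Finite (Quot (TwistedConj ψ))] (P : Finset ℕ) (hP : ∀ p ∈ P, p.Prime ∧ 5 ≤ p)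
    (hE : ∀ n, 5 ≤ n → ∃ π : E →* Alt n, Function.Surjective π) :
    P.card ≤ Nat.card (Quot (TwistedConj ψ)) := by
  classical
  -- the finite set of kernels
  have hfin : (⋃ p ∈ P, {N : Subgroup E | ∃ π : E →* Alt (p + 2),
      Function.Surjective π ∧ π.ker = N}).Finite := by
    apply Set.Finite.biUnion P.finite_toSet
    intro p _
    have := finite_hom E (Alt (p + 2))
    apply (Set.finite_range (fun π : E →* Alt (p + 2) => π.ker)).subset
    rintro N ⟨π, _, rfl⟩
    exact ⟨π, rfl⟩
  let T := hfin.toFinset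
  have memT : ∀ N, N ∈ T ↔ ∃ p ∈ P, ∃ π : E →* Alt (p + 2),
      Function.Surjective π ∧ π.ker = N := by
    intro N
    simp [T]
  have hT : ∀ N ∈ T, GoodKer N := by
    intro N hN
    obtain ⟨p, hp, π, hπ, rfl⟩ := (memT N).1 hN
    exact ⟨p + 2, by have := (hP p hp).2; omega, π, hπ, rfl⟩
  have hTinv : ∀ N ∈ T, N.comap ψ.toMonoidHom ∈ T := by
    intro N hN
    obtain ⟨p, hp, π, hπ, rfl⟩ := (memT N).1 hN
    exact (memT _).2 ⟨p, hp, π.comp ψ.toMonoidHom, hπ.comp ψ.surjective, rfl⟩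
  have hTinv' : ∀ N ∈ T, N.comap ψ.symm.toMonoidHom ∈ T := by
    intro N hN
    obtain ⟨p, hp, π, hπ, rfl⟩ := (memT N).1 hN
    exact (memT _).2 ⟨p, hp, π.comp ψ.symm.toMonoidHom, hπ.comp ψ.symm.surjective, rfl⟩
  -- elements
  have hg : ∀ p ∈ P, ∃ g : E, (∀ π : E →* Alt (p + 2), Function.Surjective π →
      orderOf (π g) = p) ∧ ∀ N ∈ T, N.index ≠ Nat.card (Alt (p + 2)) → g ∈ N := by
    intro p hp
    have hpp := (hP p hp).1
    have : Fact p.Prime := ⟨hpp⟩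
    have hx : ∀ N : Subgroup E, ∃ x : E,
        ((∃ π : E →* Alt (p + 2), Function.Surjective π ∧ π.ker = N) → x ∉ N ∧ x ^ p ∈ N) ∧
        (N.index ≠ Nat.card (Alt (p + 2)) → x = 1) := by
      intro N
      by_cases h : ∃ π : E →* Alt (p + 2), Function.Surjective π ∧ π.ker = N
      · obtain ⟨π, hπ, rfl⟩ := h
        obtain ⟨a, ha⟩ := alt_exists hpp (hP p hp).2
        obtain ⟨x, rfl⟩ := hπ a
        refine ⟨x, fun _ => ⟨?_, ?_⟩, ?_⟩
        · rw [MonoidHom.mem_ker]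
          intro h1
          rw [h1, orderOf_one] at ha
          exact hpp.one_lt.ne ha
        · rw [MonoidHom.mem_ker, map_pow]
          exact orderOf_dvd_iff_pow_eq_one.1 (dvd_of_eq ha)
        · intro h; exact absurd (index_ker_alt π hπ) h
      · exact ⟨1, fun h' => absurd h' h, fun _ => rfl⟩
    choose τ hτ using hx
    obtain ⟨g, hg⟩ := crt T hT τ
    refine ⟨g, ?_, ?_⟩
    · intro π hπ
      obtain ⟨h1, h2⟩ := (hτ π.ker).1 ⟨π, hπ, rfl⟩
      have h3 := hg π.ker ((memT _).2 ⟨p, hp, π, hπ, rfl⟩)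
      rw [MonoidHom.mem_ker, map_mul, map_inv, inv_mul_eq_one] at h3
      rw [MonoidHom.mem_ker, h3] at h1
      rw [MonoidHom.mem_ker, map_pow, h3] at h2
      exact orderOf_eq_prime h2 h1
    · intro N hN hne
      have h3 := hg N hN
      rw [(hτ N).2 hne] at h3
      simpa using h3
  choose! g hg1 hg2 using hg
  -- the quotient
  let K := T.inf id
  have memK : ∀ x, x ∈ K ↔ ∀ N ∈ T, x ∈ N := by
    intro x
    simp only [K, Finset.inf_id_eq_sInf, Subgroup.mem_sInf, Finset.mem_coe]
  have hKn : K.Normal := inf_normal T (fun N hN => (hT N hN).normal)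
  have hKf : K.FiniteIndex := by
    have : K = ⨅ N : T, (N : Subgroup E) := by
      ext x; rw [memK]; simp [Subgroup.mem_iInf]
    rw [this]
    apply Subgroup.finiteIndex_iInf
    rintro ⟨N, hN⟩
    obtain ⟨n, hn, π, hπ, rfl⟩ := hT N hN
    exact Subgroup.finiteIndex_ker π
  have hmap : K.map ψ.toMonoidHom = K := by
    ext x
    constructor
    · rintro ⟨y, hy, rfl⟩
      rw [memK]
      intro N hN
      exact (memK y).1 hy _ (hTinv N hN)
    · intro hx
      refine ⟨ψ.symm x, ?_, by simp⟩
      apply (memK _).2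
      intro N hN
      exact (memK x).1 hx _ (hTinv' N hN)
  let ψ' : E ⧸ K ≃* E ⧸ K := QuotientGroup.congr K K ψ hmap
  have hψ' : ∀ x : E, ψ' (x : E ⧸ K) = ((ψ x : E) : E ⧸ K) := fun x => rfl
  have hsurj : Nat.card (Quot (TwistedConj ψ')) ≤ Nat.card (Quot (TwistedConj ψ)) := by
    apply Nat.card_le_card_of_surjective (Quot.map (ra := TwistedConj ψ) (rb := TwistedConj ψ')
      (fun x : E => (x : E ⧸ K)) (by
        rintro a b ⟨x, rfl⟩
        exact ⟨x, by rw [hψ']; rfl⟩))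
    intro q
    induction q using Quot.ind with
    | mk y =>
      obtain ⟨x, rfl⟩ := QuotientGroup.mk_surjective y
      exact ⟨Quot.mk _ x, rfl⟩
  refine le_trans ?_ hsurj
  have hfinH : Finite (E ⧸ K) := inferInstance
  have := burnside_bound ψ' (ι := P) (fun p => ((g p : E) : E ⧸ K)) ?_ ?_
  · simpa using this
  · rintro ⟨p, hp⟩
    rw [hψ', isConj_iff]
    have hx : ∀ N, ∃ x, N ∈ T → x * g p * x⁻¹ * (ψ (g p))⁻¹ ∈ N := by
      intro N
      by_cases hN : N ∈ T
      swap
      · exact ⟨1, fun h => absurd h hN⟩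
      by_cases hi : N.index = Nat.card (Alt (p + 2))
      · obtain ⟨q, hq, π, hπ, rfl⟩ := (memT N).1 hN
        rw [index_ker_alt π hπ] at hi
        have := alt_card_inj (by have := (hP q hq).2; omega) (by have := (hP p hp).2; omega) hi
        have hpq : q = p := by omega
        subst hpq
        obtain ⟨y, hy⟩ := isConj_iff.1 (alt_conj (hP q hp).1 (hP q hp).2 _ _ (hg1 q hp π hπ)
          (hg1 q hp (π.comp ψ.toMonoidHom) (hπ.comp ψ.surjective)))
        obtain ⟨x, rfl⟩ := hπ y
        refine ⟨x, fun _ => ?_⟩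
        rw [MonoidHom.mem_ker]
        simp only [map_mul, map_inv]
        rw [hy]
        simp
      · refine ⟨1, fun _ => ?_⟩
        have h1 := hg2 p hp N hN hi
        have h2 : ψ (g p) ∈ N := by
          refine hg2 p hp (N.comap ψ.toMonoidHom) (hTinv N hN) ?_
          rwa [Subgroup.index_comap_of_surjective N (f := ψ.toMonoidHom) ψ.surjective]
        simpa using N.mul_mem h1 (N.inv_mem h2)
    choose τ hτ using hx
    obtain ⟨x, hx⟩ := crt T hT τ
    refine ⟨(x : E ⧸ K), ?_⟩
    have hmem : (ψ (g p))⁻¹ * (x * g p * x⁻¹) ∈ K := by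
      rw [memK]
      intro N hN
      obtain ⟨m, hm, ρ, hρ, rfl⟩ := hT N hN
      have h1 := hx _ hN
      have h2 := hτ _ hN
      rw [MonoidHom.mem_ker] at h1 h2 ⊢
      simp only [map_mul, map_inv] at h1 h2 ⊢
      rw [inv_mul_eq_one] at h1 ⊢
      rw [mul_inv_eq_one] at h2
      rw [← h1, h2]
    exact (QuotientGroup.eq.2 hmem).symm
  · rintro ⟨p, hp⟩ ⟨q, hq⟩ hc
    by_contra hne
    have hpq : p ≠ q := fun h => hne (Subtype.ext h)
    obtain ⟨y, hy⟩ := isConj_iff.1 hc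
    obtain ⟨x, rfl⟩ := QuotientGroup.mk_surjective y
    have hmem := QuotientGroup.eq.1 (hy : ((x * g p * x⁻¹ : E) : E ⧸ K) = ((g q : E) : E ⧸ K))
    rw [memK] at hmem
    obtain ⟨π, hπ⟩ := hE (q + 2) (by have := (hP q hq).2; omega)
    have hN : π.ker ∈ T := (memT _).2 ⟨q, hq, π, hπ, rfl⟩
    have h1 := hmem _ hN
    have h2 : g p ∈ π.ker := by
      apply hg2 p hp _ hN
      rw [index_ker_alt π hπ]
      intro h
      have := alt_card_inj (by have := (hP q hq).2; omega) (by have := (hP p hp).2; omega) h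
      omega
    have h3 := hg1 q hq π hπ
    rw [MonoidHom.mem_ker] at h1 h2
    simp only [map_mul, map_inv, h2, mul_one, mul_inv_cancel, inv_one, one_mul] at h1
    rw [h1, orderOf_one] at h3
    exact (hP q hq).1.one_lt.ne h3

theorem reid_infinite {E : Type*} [Group E] [Group.FG E] (ψ : E ≃* E)
    (hE : ∀ n, 5 ≤ n → ∃ π : E →* Alt n, Function.Surjective π) :
    ¬ Finite (Quot (TwistedConj ψ)) := by
  intro hfin
  have hinf : {p : ℕ | p.Prime ∧ 5 ≤ p}.Infinite := by
    intro h
    obtain ⟨B, hB⟩ := h.bddAbove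
    obtain ⟨p, hp1, hp2⟩ := Nat.exists_infinite_primes (B + 6)
    have := hB ⟨hp2, by omega⟩
    omega
  obtain ⟨P, hP, hcard⟩ := hinf.exists_subset_card_eq (Nat.card (Quot (TwistedConj ψ)) + 1)
  have := reid_bound ψ P (fun p hp => hP hp) hE
  omega

end RInf

namespace RInf

theorem charK_normal (G X : Type*) [Group G] [Group X] : (charK G X).Normal := by
  constructor
  intro x hx g
  rw [mem_charK] at hx ⊢
  intro f
  simp [hx f]

theorem freeGroup_comm_of_subsingleton {X : Type*} [Subsingleton X] (a b : FreeGroup X) :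
    a * b = b * a := by
  have h1 : ∀ (x : X) (b : FreeGroup X), Commute (FreeGroup.of x) b := by
    intro x b
    induction b using FreeGroup.induction_on with
    | C1 => exact Commute.one_right _
    | of y => rw [Subsingleton.elim x y]
    | inv_of y h => exact h.inv_right
    | mul a b ha hb => exact ha.mul_right hb
  have h2 : Commute a b := by
    induction a using FreeGroup.induction_on with
    | C1 => exact Commute.one_left _
    | of y => exact h1 y b
    | inv_of y h => exact h.inv_left
    | mul a b ha hb => exact ha.mul_left hb
  exact h2

theorem free_surj_perm {X : Type*} [Nontrivial X] (n : ℕ) (hn : 5 ≤ n) :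
    ∃ π : FreeGroup X →* Equiv.Perm (Fin n), Function.Surjective π := by
  classical
  obtain ⟨x, y, hxy⟩ := exists_pair_ne X
  obtain ⟨m, rfl⟩ : ∃ m, n = m + 2 := ⟨n - 2, by omega⟩
  let σ := finRotate (m + 2)
  have hc := Equiv.Perm.closure_cycle_adjacent_swap (σ := σ) isCycle_finRotate
    (support_finRotate) 0
  refine ⟨FreeGroup.lift (fun z => if z = x then σ else Equiv.swap 0 (σ 0)), ?_⟩
  rw [← MonoidHom.range_eq_top, eq_top_iff, ← hc, Subgroup.closure_le]
  rintro z (rfl | rfl)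
  · exact ⟨FreeGroup.of x, by simp⟩
  · exact ⟨FreeGroup.of y, by simp [hxy.symm]⟩

theorem surj_perm {C D : Type*} [Group C] (f : C →* FreeGroup D) (a b : C)
    (hab : f a * f b ≠ f b * f a) (n : ℕ) (hn : 5 ≤ n) :
    ∃ π : C →* Equiv.Perm (Fin n), Function.Surjective π := by
  let X := IsFreeGroup.Generators f.range
  let e : f.range ≃* FreeGroup X := IsFreeGroup.toFreeGroup f.range
  have : Nontrivial X := by
    by_contra h
    rw [not_nontrivial_iff_subsingleton] at h
    have h1 := freeGroup_comm_of_subsingleton (e (f.rangeRestrict a)) (e (f.rangeRestrict b))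
    rw [← map_mul e, ← map_mul e, e.injective.eq_iff] at h1
    exact hab (congrArg Subtype.val h1)
  obtain ⟨π, hπ⟩ := free_surj_perm (X := X) n hn
  exact ⟨π.comp (e.toMonoidHom.comp f.rangeRestrict),
    hπ.comp (e.surjective.comp f.rangeRestrict_surjective)⟩

theorem surj_alt {C : Type*} [Group C] (n : ℕ) (hn : 5 ≤ n) (π : C →* Equiv.Perm (Fin n))
    (hπ : Function.Surjective π) :
    ∃ ρ : charK C ℤˣ →* Alt n, Function.Surjective ρ := by
  have hmem : ∀ x : charK C ℤˣ, π.comp (charK C ℤˣ).subtype x ∈ Alt n := by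
    intro x
    exact (mem_charK.1 x.2) (Equiv.Perm.sign.comp π)
  refine ⟨(π.comp (charK C ℤˣ).subtype).codRestrict (Alt n) hmem, ?_⟩
  rintro ⟨y, hy⟩
  have hy' : y ∈ commutator (Equiv.Perm (Fin n)) := by
    rw [alternatingGroup.commutator_perm_eq (by simpa using hn)]
    exact hy
  have h2 : (commutator C).map π = commutator (Equiv.Perm (Fin n)) := by
    rw [commutator_def, commutator_def, Subgroup.map_commutator, ← MonoidHom.range_eq_map,
      MonoidHom.range_eq_top.2 hπ]
  rw [← h2] at hy'
  obtain ⟨c, hc, rfl⟩ := hy'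
  refine ⟨⟨c, ?_⟩, rfl⟩
  rw [mem_charK]
  intro f
  exact Abelianization.commutator_subset_ker f hc

theorem large_rInfinity {G : Type*} [Group G] [Group.FG G] (Γ : Subgroup G) [Γ.FiniteIndex]
    {D : Type*} (f : Γ →* FreeGroup D) (a b : G)
    (hab : ∀ N, 0 < N → ∀ (ha : a ^ N ∈ Γ) (hb : b ^ N ∈ Γ),
      f ⟨a ^ N, ha⟩ * f ⟨b ^ N, hb⟩ ≠ f ⟨b ^ N, hb⟩ * f ⟨a ^ N, ha⟩) :
    PropertyRInfinity G := by
  intro φ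
  unfold ReidemeisterInfinite
  rw [← not_finite_iff_infinite]
  intro hfin
  have hfX : Finite (Equiv.Perm (G ⧸ Γ)) := inferInstance
  let C := charK G (Equiv.Perm (G ⧸ Γ))
  have hCf : C.FiniteIndex := charK_finiteIndex _ _
  have hCn : C.Normal := charK_normal _ _
  have hCΓ : C ≤ Γ := by
    refine le_trans ?_ Γ.normalCore_le
    rw [Subgroup.normalCore_eq_ker]
    intro x hx
    exact mem_charK.1 hx _
  let φC := restrictAut φ C (charK_inv φ)
  have hfinC : Finite (Quot (TwistedConj φC)) := finite_restrict φ C (charK_inv φ)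
  have hCfg : Group.FG C := Subgroup.fg_of_index_ne_zero C
  let E := charK C ℤˣ
  have hEf : E.FiniteIndex := charK_finiteIndex _ _
  have hfinE := finite_restrict φC E (charK_inv φC)
  have hEfg : Group.FG E := Subgroup.fg_of_index_ne_zero E
  refine reid_infinite _ ?_ hfinE
  intro n hn
  have hN : 0 < C.index := Nat.pos_of_ne_zero hCf.index_ne_zero
  have ha := C.pow_index_mem a
  have hb := C.pow_index_mem b
  obtain ⟨π, hπ⟩ := surj_perm (f.comp (Subgroup.inclusion hCΓ)) ⟨_, ha⟩ ⟨_, hb⟩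
    (hab _ hN (hCΓ ha) (hCΓ hb)) n hn
  exact surj_alt n hn π hπ

end RInf

namespace RInf

/-- The Chebyshev-like sequence attached to a dihedral parameter. -/
def aSeq {R : Type*} [CommRing R] (c : R) : ℕ → R
  | 0 => 0
  | 1 => 1
  | (n + 2) => c * aSeq c (n + 1) - aSeq c n

theorem aSeq_zero {R : Type*} [CommRing R] (c : R) : aSeq c 0 = 0 := rfl
theorem aSeq_one {R : Type*} [CommRing R] (c : R) : aSeq c 1 = 1 := rfl
theorem aSeq_add_two {R : Type*} [CommRing R] (c : R) (n : ℕ) :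
    aSeq c (n + 2) = c * aSeq c (n + 1) - aSeq c n := rfl

theorem aSeq_refl {R : Type*} [CommRing R] (c : R) (m : ℕ) (hm : 1 ≤ m) (h0 : aSeq c m = 0)
    (h1 : aSeq c (m - 1) = 1) : ∀ j, j + 1 ≤ m →
      aSeq c (m - j) = aSeq c j ∧ aSeq c (m - (j + 1)) = aSeq c (j + 1) := by
  intro j
  induction j with
  | zero => intro _; exact ⟨by simpa [aSeq_zero] using h0, by simpa [aSeq_one] using h1⟩
  | succ j ih =>
    intro hj
    obtain ⟨e1, e2⟩ := ih (by omega)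
    refine ⟨e2, ?_⟩
    obtain ⟨k, hk⟩ : ∃ k, m = k + (j + 2) := ⟨m - (j + 2), by omega⟩
    have h3 := aSeq_add_two c k
    have h4 := aSeq_add_two c j
    have a1 : m - j = k + 2 := by omega
    have a2 : m - (j + 1) = k + 1 := by omega
    have a3 : m - (j + 1 + 1) = k := by omega
    rw [a1] at e1
    rw [a2] at e2
    rw [a3, show j + 1 + 1 = j + 2 from rfl, h4, ← e2, ← e1, h3]
    ring

theorem aSeq_refl' {R : Type*} [CommRing R] (c : R) (m : ℕ) (hm : 1 ≤ m) (h0 : aSeq c m = 0)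
    (h1 : aSeq c (m - 1) = 1) (j : ℕ) (hj : j ≤ m) : aSeq c (m - j) = aSeq c j := by
  rcases Nat.eq_or_lt_of_le hj with h | h
  · subst h; simp [aSeq_zero, h0]
  · exact (aSeq_refl c m hm h0 h1 j h).1

theorem aSeq_back {R : Type*} [CommRing R] (c : R) (i d : ℕ) (h0 : aSeq c i = aSeq c (i + d))
    (h1 : aSeq c (i + 1) = aSeq c (i + d + 1)) : aSeq c d = 0 := by
  induction i with
  | zero => simpa [aSeq_zero] using h0.symm
  | succ i ih =>
    have e0 : i + 1 + d = i + d + 1 := by omega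
    rw [e0] at h0 h1
    refine ih ?_ h0
    have h3 := aSeq_add_two c i
    have h4 := aSeq_add_two c (i + d)
    rw [show i + 1 + 1 = i + 2 from rfl, show i + d + 1 + 1 = i + d + 2 from rfl, h3, h4, h0] at h1
    linear_combination -h1

theorem aSeq_alt_sum {R : Type*} [CommRing R] [LinearOrder R] [IsStrictOrderedRing R] (c : R)
    (m : ℕ) (hm : 1 ≤ m) (h0 : aSeq c m = 0)
    (h1 : aSeq c (m - 1) = 1) (hodd : Odd m) :
    ∑ i ∈ Finset.range m, (-1 : R) ^ i * aSeq c i = 0 ∧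
    ∑ i ∈ Finset.range m, (-1 : R) ^ i * aSeq c (i + 1) = 0 := by
  have hY : ∑ i ∈ Finset.range (m + 1), (-1 : R) ^ i * aSeq c i = 0 := by
    have h := Finset.sum_range_reflect (fun i => (-1 : R) ^ i * aSeq c i) (m + 1)
    have h2 : ∑ j ∈ Finset.range (m + 1), (-1 : R) ^ (m + 1 - 1 - j) * aSeq c (m + 1 - 1 - j)
        = - ∑ i ∈ Finset.range (m + 1), (-1 : R) ^ i * aSeq c i := by
      rw [← Finset.sum_neg_distrib]
      apply Finset.sum_congr rfl
      intro j hj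
      have hj' : j ≤ m := by have := Finset.mem_range.1 hj; omega
      rw [show m + 1 - 1 - j = m - j by omega, aSeq_refl' c m hm h0 h1 j hj']
      have : (-1 : R) ^ (m - j) * (-1) ^ j = -1 := by
        rw [← pow_add, Nat.sub_add_cancel hj', hodd.neg_one_pow]
      have h3 : (-1 : R) ^ j * (-1) ^ j = 1 := by
        rw [← mul_pow]; simp
      have h4 : (-1 : R) ^ (m - j) = - (-1) ^ j := by
        linear_combination (-1 : R) ^ j * this - (-1 : R) ^ (m - j) * h3
      rw [h4]; ring
    rw [h2] at h
    linarith
  constructor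
  · rw [Finset.sum_range_succ, h0] at hY
    simpa using hY
  · rw [Finset.sum_range_succ', aSeq_zero] at hY
    have : ∑ i ∈ Finset.range m, (-1 : R) ^ i * aSeq c (i + 1) =
        - ∑ k ∈ Finset.range m, (-1 : R) ^ (k + 1) * aSeq c (k + 1) := by
      rw [← Finset.sum_neg_distrib]
      apply Finset.sum_congr rfl
      intro i _
      ring
    rw [this]
    simpa using hY

/-- The numerical data defining the geometric representation. -/
structure Cx (S R : Type*) [CommRing R] [LinearOrder R] (M : S → S → ℕ) where
  c : S → S → R
  symm : ∀ s t, c s t = c t s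
  ge1 : ∀ s t, s ≠ t → 1 ≤ c s t
  a_top : ∀ s t, s ≠ t → 2 ≤ M s t → aSeq (c s t) (M s t) = 0
  a_pred : ∀ s t, s ≠ t → 2 ≤ M s t → aSeq (c s t) (M s t - 1) = 1
  a_pos : ∀ s t, s ≠ t → 2 ≤ M s t → ∀ j, 0 < j → j < M s t → 0 < aSeq (c s t) j

end RInf

namespace RInf

/-- The `j`-th letter of the alternating word. -/
def letter {S : Type*} (s t : S) (j : ℕ) : S := if j % 2 = 0 then s else t

theorem letter_add_two {S : Type*} (s t : S) (j : ℕ) : letter s t (j + 2) = letter s t j := by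
  simp [letter]

theorem letter_zero {S : Type*} (s t : S) : letter s t 0 = s := rfl
theorem letter_one {S : Type*} (s t : S) : letter s t 1 = t := rfl

theorem letter_cases {S : Type*} (s t : S) (j : ℕ) :
    (letter s t j = s ∧ letter s t (j + 1) = t) ∨ (letter s t j = t ∧ letter s t (j + 1) = s) := by
  rcases Nat.mod_two_eq_zero_or_one j with h | h
  · left; simp [letter, h, Nat.add_mod]
  · right; simp [letter, h, Nat.add_mod]

theorem lift_altWord_zero {S G : Type*} [Group G] (F : S → G) (s t : S) :
    FreeGroup.lift F (altWord s t 0) = 1 := by simp [altWord]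

theorem lift_altWord_succ {S G : Type*} [Group G] (F : S → G) (s t : S) (m : ℕ) :
    FreeGroup.lift F (altWord s t (m + 1)) =
      FreeGroup.lift F (altWord s t m) * F (letter s t m) := by
  simp only [altWord, List.range_succ, List.map_append, List.prod_append, map_mul, List.map_cons,
    List.map_nil, List.prod_cons, List.prod_nil, mul_one]
  congr 1
  unfold letter
  split_ifs <;> simp

set_option linter.unusedSectionVars false

section Geometric

variable {S R : Type*} [Fintype S] [DecidableEq S] [CommRing R] [LinearOrder R]
  [IsStrictOrderedRing R] {M : S → S → ℕ} (X : Cx S R M)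

/-- Simple roots. -/
def eb (R : Type*) {S : Type*} [DecidableEq S] [CommRing R] (s : S) : S → R := Pi.single s 1

/-- The linear form of a simple root. -/
def Cx.form (s : S) : (S → R) →ₗ[R] R :=
  ∑ t, (if s = t then (2 : R) else - X.c s t) • LinearMap.proj t

theorem Cx.form_eb (s t : S) : X.form s (eb R t) = if s = t then (2 : R) else - X.c s t := by
  simp only [Cx.form, eb, LinearMap.sum_apply, LinearMap.smul_apply, LinearMap.proj_apply,
    smul_eq_mul]
  rw [Finset.sum_eq_single t]
  · simp
  · intro u _ hu; simp [hu]
  · simp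

theorem Cx.form_self (s : S) : X.form s (eb R s) = 2 := by simp [X.form_eb]

/-- Simple reflections. -/
def Cx.refl (s : S) : (S → R) ≃ₗ[R] (S → R) := Module.reflection (X.form_self s)

theorem Cx.refl_apply (s : S) (x : S → R) : X.refl s x = x - X.form s x • eb R s :=
  Module.reflection_apply _ _

theorem Cx.refl_self (s : S) : X.refl s (eb R s) = - eb R s := Module.reflection_apply_self _

theorem Cx.refl_other {s t : S} (h : s ≠ t) : X.refl s (eb R t) = eb R t + X.c s t • eb R s := by
  rw [X.refl_apply, X.form_eb, if_neg h]
  simp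

theorem Cx.refl_inv (s : S) : (X.refl s)⁻¹ = X.refl s := Module.reflection_inv _

/-- Dihedral roots. -/
def gam (c : R) (s t : S) (j : ℕ) : S → R := aSeq c (j + 1) • eb R s + aSeq c j • eb R t

theorem gam_add_two (c : R) (s t : S) (j : ℕ) :
    gam c s t (j + 2) = c • gam c s t (j + 1) - gam c s t j := by
  unfold gam
  rw [aSeq_add_two, aSeq_add_two]
  module

/-- The product of reflections along the alternating word. -/
def Cx.W (s t : S) (m : ℕ) : (S → R) ≃ₗ[R] (S → R) := FreeGroup.lift X.refl (altWord s t m)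

theorem Cx.W_zero (s t : S) : X.W s t 0 = 1 := lift_altWord_zero _ _ _

theorem Cx.W_succ (s t : S) (m : ℕ) : X.W s t (m + 1) = X.W s t m * X.refl (letter s t m) :=
  lift_altWord_succ _ _ _ _

theorem Cx.W_root {s t : S} (h : s ≠ t) (j : ℕ) :
    X.W s t j (eb R (letter s t j)) = gam (X.c s t) s t j ∧
    X.W s t j (eb R (letter s t (j + 1))) =
      gam (X.c s t) s t (j + 1) - X.c s t • gam (X.c s t) s t j := by
  induction j with
  | zero =>
    rw [X.W_zero, letter_zero, letter_one]
    simp [gam, aSeq_zero, aSeq_one, aSeq_add_two]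
  | succ j ih =>
    have hne : letter s t j ≠ letter s t (j + 1) ∧
        X.c (letter s t j) (letter s t (j + 1)) = X.c s t := by
      rcases letter_cases s t j with ⟨h1, h2⟩ | ⟨h1, h2⟩
      · rw [h1, h2]; exact ⟨h, rfl⟩
      · rw [h1, h2]; exact ⟨h.symm, X.symm _ _⟩
    constructor
    · rw [X.W_succ, LinearEquiv.mul_apply, X.refl_other hne.1, map_add, map_smul, ih.1, ih.2,
        hne.2]
      abel
    · rw [X.W_succ, LinearEquiv.mul_apply, letter_add_two, X.refl_self, map_neg, ih.1,
        gam_add_two]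
      abel

theorem Cx.W_apply {s t : S} (h : s ≠ t) (m : ℕ) (x : S → R) :
    X.W s t m x = x - ∑ j ∈ Finset.range m,
      X.form (letter s t j) x • gam (X.c s t) s t j := by
  induction m with
  | zero => simp [X.W_zero]
  | succ m ih =>
    rw [X.W_succ, LinearEquiv.mul_apply, X.refl_apply, map_sub, map_smul, (X.W_root h m).1, ih,
      Finset.sum_range_succ]
    abel

theorem Cx.gam_rev {s t : S} (h : s ≠ t) (hm : 2 ≤ M s t) (j : ℕ) (hj : j < M s t) :
    gam (X.c t s) t s j = gam (X.c s t) s t (M s t - 1 - j) := by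
  have h0 := X.a_top s t h hm
  have h1 := X.a_pred s t h hm
  unfold gam
  rw [X.symm t s, show M s t - 1 - j + 1 = M s t - j by omega,
    show M s t - 1 - j = M s t - (j + 1) by omega,
    aSeq_refl' _ _ (by omega) h0 h1 j (by omega),
    aSeq_refl' _ _ (by omega) h0 h1 (j + 1) (by omega)]
  abel

theorem letter_rev_even {m j : ℕ} (hm : Even m) (hj : j < m) (s t : S) :
    letter t s (m - 1 - j) = letter s t j := by
  obtain ⟨k, rfl⟩ := hm
  unfold letter
  by_cases h : j % 2 = 0
  · rw [if_neg (by omega), if_pos h]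
  · rw [if_pos (by omega), if_neg h]

theorem letter_rev_odd {m j : ℕ} (hm : Odd m) (hj : j < m) (s t : S) :
    letter t s (m - 1 - j) = letter t s j := by
  obtain ⟨k, rfl⟩ := hm
  unfold letter
  by_cases h : j % 2 = 0
  · rw [if_pos (by omega), if_pos h]
  · rw [if_neg (by omega), if_neg h]

theorem Cx.W_braid {s t : S} (h : s ≠ t) (hm : 2 ≤ M s t) :
    X.W s t (M s t) = X.W t s (M s t) := by
  have h0 := X.a_top s t h hm
  have h1 := X.a_pred s t h hm
  ext1 x
  rw [X.W_apply h, X.W_apply h.symm]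
  congr 1
  have hrev : ∑ j ∈ Finset.range (M s t), X.form (letter t s j) x • gam (X.c t s) t s j =
      ∑ j ∈ Finset.range (M s t),
        X.form (letter t s (M s t - 1 - j)) x • gam (X.c s t) s t j := by
    rw [← Finset.sum_range_reflect]
    apply Finset.sum_congr rfl
    intro j hj
    have hj' := Finset.mem_range.1 hj
    rw [X.gam_rev h hm _ (by omega), show M s t - 1 - (M s t - 1 - j) = j by omega]
  rw [hrev]
  rcases Nat.even_or_odd (M s t) with he | ho
  · apply Finset.sum_congr rfl
    intro j hj
    rw [letter_rev_even he (Finset.mem_range.1 hj)]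
  · obtain ⟨e1, e2⟩ := aSeq_alt_sum (X.c s t) (M s t) (by omega) h0 h1 ho
    rw [← sub_eq_zero, ← Finset.sum_sub_distrib]
    have : ∀ j ∈ Finset.range (M s t), X.form (letter s t j) x • gam (X.c s t) s t j -
        X.form (letter t s (M s t - 1 - j)) x • gam (X.c s t) s t j =
        (X.form s x - X.form t x) • ((((-1 : R) ^ j) * aSeq (X.c s t) (j + 1)) • eb R s
          + (((-1 : R) ^ j) * aSeq (X.c s t) j) • eb R t) := by
      intro j hj
      rw [letter_rev_odd ho (Finset.mem_range.1 hj)]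
      unfold gam letter
      by_cases hj2 : j % 2 = 0
      · rw [if_pos hj2, if_pos hj2, Even.neg_one_pow (Nat.even_iff.2 hj2)]
        module
      · rw [if_neg hj2, if_neg hj2, Odd.neg_one_pow (Nat.odd_iff.2 (by omega))]
        module
    rw [Finset.sum_congr rfl this, ← Finset.smul_sum, Finset.sum_add_distrib, ← Finset.sum_smul,
      ← Finset.sum_smul, e1, e2]
    simp

theorem eb_apply (s t : S) : (eb R s) t = if t = s then 1 else 0 := by
  simp [eb, Pi.single_apply]

theorem Cx.gam_sub_ne {s t : S} (h : s ≠ t) (hm : 2 ≤ M s t) {i j : ℕ} (hij : i < j)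
    (hj : j < M s t) : gam (X.c s t) s t i - gam (X.c s t) s t j ≠ 0 := by
  intro h0
  have hs := congrFun h0 s
  have ht := congrFun h0 t
  simp only [gam, Pi.sub_apply, Pi.add_apply, Pi.smul_apply, eb_apply, h, h.symm, if_true,
    if_false, smul_eq_mul, mul_one, mul_zero, add_zero, zero_add, Pi.zero_apply] at hs ht
  have hd := aSeq_back (X.c s t) i (j - i)
    (by rw [Nat.add_sub_cancel' hij.le]; exact sub_eq_zero.1 ht)
    (by rw [Nat.add_sub_cancel' hij.le]; exact sub_eq_zero.1 hs)
  have := X.a_pos s t h hm (j - i) (by omega) (by omega)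
  exact this.ne' hd

theorem Cx.gam_add_ne {s t : S} (h : s ≠ t) (hm : 2 ≤ M s t) {i j : ℕ} (hij : i < j)
    (hj : j < M s t) : gam (X.c s t) s t i + gam (X.c s t) s t j ≠ 0 := by
  intro h0
  have hs := congrFun h0 s
  simp only [gam, Pi.add_apply, Pi.smul_apply, eb_apply, h, h.symm, if_true,
    if_false, smul_eq_mul, mul_one, mul_zero, add_zero, zero_add, Pi.zero_apply] at hs
  have h1 := X.a_pos s t h hm (i + 1) (by omega) (by omega)
  have h2 : 0 ≤ aSeq (X.c s t) (j + 1) := by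
    rcases Nat.eq_or_lt_of_le (show j + 1 ≤ M s t by omega) with h3 | h3
    · rw [h3, X.a_top s t h hm]
    · exact (X.a_pos s t h hm (j + 1) (by omega) h3).le
  linarith

end Geometric
end RInf

namespace RInf

set_option linter.unusedSectionVars false

/-- Right translation action on functions. -/
def shiftAct (Ω P : Type*) [Group Ω] [Group P] : Ω →* MulAut (Ω → P) where
  toFun T₁ :=
    { toFun := fun κ T => κ (T * T₁)
      invFun := fun κ T => κ (T * T₁⁻¹)
      left_inv := fun κ => by ext T; simp
      right_inv := fun κ => by ext T; simp
      map_mul' := fun κ κ' => rfl }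
  map_one' := by ext κ T; simp
  map_mul' T₁ T₂ := by ext κ T; simp [mul_assoc]

theorem shiftAct_apply {Ω P : Type*} [Group Ω] [Group P] (T₁ : Ω) (κ : Ω → P) (T : Ω) :
    shiftAct Ω P T₁ κ T = κ (T * T₁) := rfl

section Cocycle

variable {S R : Type*} [Fintype S] [DecidableEq S] [CommRing R] [LinearOrder R]
  [IsStrictOrderedRing R] {M : S → S → ℕ} (X : Cx S R M) {P : Type*} [Group P]

theorem altRel_eq_one {G : Type*} [Group G] (F : S → G)
    (hF : ∀ s t, s ≠ t → 2 ≤ M s t → FreeGroup.lift F (altWord s t (M s t)) =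
      FreeGroup.lift F (altWord t s (M s t))) :
    ∀ r ∈ artinRels M, FreeGroup.lift F r = 1 := by
  rintro r ⟨s, t, hst, hm, rfl⟩
  rw [map_mul, map_inv, hF s t hst hm, mul_inv_cancel]

/-- The geometric representation. -/
def Cx.rho : ArtinGroup M →* ((S → R) ≃ₗ[R] (S → R)) :=
  PresentedGroup.toGroup (f := X.refl) (altRel_eq_one X.refl (fun _ _ h hm => X.W_braid h hm))

theorem Cx.rho_gen (s : S) : X.rho (artinGen M s) = X.refl s := PresentedGroup.toGroup.of _

/-- Compatibility of a label function with the braid relations. -/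
def Cx.Compat (l : (S → R) → P) : Prop :=
  ∀ (T : (S → R) ≃ₗ[R] (S → R)) (s t : S), s ≠ t → 2 ≤ M s t → ∀ i j, i < j → j < M s t →
    l (T (gam (X.c s t) s t i)) = 1 ∨ l (T (gam (X.c s t) s t j)) = 1

/-- Image of a generator in the semidirect product. -/
def Cx.cocGen (l : (S → R) → P) (s : S) :
    (((S → R) ≃ₗ[R] (S → R)) → P) ⋊[shiftAct ((S → R) ≃ₗ[R] (S → R)) P]
      ((S → R) ≃ₗ[R] (S → R)) :=
  ⟨fun T => l (T (eb R s)), X.refl s⟩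

theorem Cx.coc_right (l : (S → R) → P) (s t : S) (m : ℕ) :
    (FreeGroup.lift (X.cocGen l) (altWord s t m)).right = X.W s t m := by
  induction m with
  | zero => rw [lift_altWord_zero, X.W_zero]; rfl
  | succ m ih => rw [lift_altWord_succ, X.W_succ, SemidirectProduct.mul_right, ih]; rfl

theorem Cx.coc_left (l : (S → R) → P) {s t : S} (h : s ≠ t) (m : ℕ)
    (T : (S → R) ≃ₗ[R] (S → R)) :
    (FreeGroup.lift (X.cocGen l) (altWord s t m)).left T =
      ((List.range m).map (fun j => l (T (gam (X.c s t) s t j)))).prod := by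
  induction m with
  | zero => rw [lift_altWord_zero]; rfl
  | succ m ih =>
    rw [lift_altWord_succ, SemidirectProduct.mul_left, Pi.mul_apply, ih, shiftAct_apply,
      X.coc_right, List.range_succ, List.map_append, List.prod_append]
    congr 1
    simp only [Cx.cocGen, LinearEquiv.mul_apply, (X.W_root h m).1, List.map_cons, List.map_nil,
      List.prod_cons, List.prod_nil, mul_one]

theorem range_map_rev {α : Type*} (f g : ℕ → α) (m : ℕ) (h : ∀ j, j < m → g j = f (m - 1 - j)) :
    (List.range m).map g = ((List.range m).map f).reverse := by
  apply List.ext_getElem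
  · simp
  · intro i h1 h2
    simp only [List.length_map, List.length_range] at h1
    simp [h i h1]

theorem Cx.coc_braid (l : (S → R) → P) (hl : X.Compat l) {s t : S} (h : s ≠ t)
    (hm : 2 ≤ M s t) :
    FreeGroup.lift (X.cocGen l) (altWord s t (M s t)) =
      FreeGroup.lift (X.cocGen l) (altWord t s (M s t)) := by
  apply SemidirectProduct.ext
  · ext T
    rw [X.coc_left l h, X.coc_left l h.symm,
      range_map_rev (fun j => l (T (gam (X.c s t) s t j)))
        (fun j => l (T (gam (X.c t s) t s j))) (M s t)
        (fun j hj => by simp only [X.gam_rev h hm j hj])]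
    apply List.Perm.prod_eq' (List.reverse_perm _).symm
    rw [List.pairwise_map]
    apply List.Pairwise.imp_of_mem _ (List.pairwise_lt_range (n := M s t))
    intro i j hi hj hij
    rcases hl T s t h hm i j hij (List.mem_range.1 hj) with h1 | h1
    · rw [h1]; exact Commute.one_left _
    · rw [h1]; exact Commute.one_right _
  · rw [X.coc_right, X.coc_right, X.W_braid h hm]

/-- The cocycle homomorphism. -/
def Cx.coc (l : (S → R) → P) (hl : X.Compat l) : ArtinGroup M →*
    (((S → R) ≃ₗ[R] (S → R)) → P) ⋊[shiftAct ((S → R) ≃ₗ[R] (S → R)) P]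
      ((S → R) ≃ₗ[R] (S → R)) :=
  PresentedGroup.toGroup (f := X.cocGen l)
    (altRel_eq_one (X.cocGen l) (fun _ _ h hm => X.coc_braid l hl h hm))

theorem Cx.coc_gen (l : (S → R) → P) (hl : X.Compat l) (s : S) :
    X.coc l hl (artinGen M s) = X.cocGen l s := PresentedGroup.toGroup.of _

theorem Cx.coc_rho (l : (S → R) → P) (hl : X.Compat l) (w : ArtinGroup M) :
    (X.coc l hl w).right = X.rho w := by
  have : SemidirectProduct.rightHom.comp (X.coc l hl) = X.rho := by
    apply PresentedGroup.ext
    intro s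
    change (X.coc l hl (artinGen M s)).right = X.rho (artinGen M s)
    rw [X.coc_gen, X.rho_gen]
    rfl
  exact DFunLike.congr_fun this w

/-- The cocycle. -/
def Cx.kap (l : (S → R) → P) (hl : X.Compat l) (T : (S → R) ≃ₗ[R] (S → R))
    (w : ArtinGroup M) : P := (X.coc l hl w).left T

variable (l : (S → R) → P) (hl : X.Compat l)

theorem Cx.kap_mul (T : (S → R) ≃ₗ[R] (S → R)) (w w' : ArtinGroup M) :
    X.kap l hl T (w * w') = X.kap l hl T w * X.kap l hl (T * X.rho w) w' := by
  unfold Cx.kap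
  rw [map_mul, SemidirectProduct.mul_left, Pi.mul_apply, shiftAct_apply, X.coc_rho]

theorem Cx.kap_one (T : (S → R) ≃ₗ[R] (S → R)) : X.kap l hl T 1 = 1 := by
  unfold Cx.kap
  rw [map_one]; rfl

theorem Cx.kap_gen (T : (S → R) ≃ₗ[R] (S → R)) (s : S) :
    X.kap l hl T (artinGen M s) = l (T (eb R s)) := by
  unfold Cx.kap
  rw [X.coc_gen]; rfl

theorem Cx.kap_inv (T : (S → R) ≃ₗ[R] (S → R)) (w : ArtinGroup M) :
    X.kap l hl T w⁻¹ = (X.kap l hl (T * (X.rho w)⁻¹) w)⁻¹ := by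
  have h := X.kap_mul l hl T w⁻¹ w
  rw [inv_mul_cancel, X.kap_one, map_inv] at h
  exact eq_inv_of_mul_eq_one_left h.symm

end Cocycle
end RInf

namespace RInf

set_option linter.unusedSectionVars false

section Congruence

variable {S R : Type*} [CommRing R]

/-- The submodule `k V`. -/
def kV (S R : Type*) [CommRing R] (k : ℕ) : Submodule R (S → R) :=
  LinearMap.range ((k : R) • (LinearMap.id : (S → R) →ₗ[R] (S → R)))

theorem mem_kV {k : ℕ} {x : S → R} : x ∈ kV S R k ↔ ∃ z, (k : R) • z = x := by
  simp [kV, LinearMap.mem_range]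

theorem kV_map {k : ℕ} (T : (S → R) →ₗ[R] (S → R)) {x : S → R} (hx : x ∈ kV S R k) :
    T x ∈ kV S R k := by
  obtain ⟨z, rfl⟩ := mem_kV.1 hx
  exact mem_kV.2 ⟨T z, by rw [map_smul]⟩

theorem kV_mono {k k' : ℕ} (h : k ∣ k') : kV S R k' ≤ kV S R k := by
  obtain ⟨m, rfl⟩ := h
  intro x hx
  obtain ⟨z, rfl⟩ := mem_kV.1 hx
  exact mem_kV.2 ⟨(m : R) • z, by rw [smul_smul]; push_cast; rfl⟩

end Congruence

section CongruenceFinite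

variable {S R : Type*} [Fintype S] [CommRing R] [LinearOrder R]
  [IsStrictOrderedRing R]

theorem finite_of_surj_torsion {V Q : Type*} [AddCommGroup V] [AddCommGroup Q] [Module.Finite ℤ V]
    (f : V →+ Q) (hf : Function.Surjective f) (k : ℕ) (hk : 0 < k) (hQ : ∀ q : Q, k • q = 0) :
    Finite Q := by
  have h1 : Module.Finite ℤ Q := Module.Finite.of_surjective f.toIntLinearMap hf
  apply Module.finite_of_fg_torsion
  intro x
  refine ⟨⟨(k : ℤ), mem_nonZeroDivisors_of_ne_zero (by exact_mod_cast hk.ne')⟩, ?_⟩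
  change (k : ℤ) • x = 0
  rw [natCast_zsmul]
  exact hQ x

theorem kV_finite [Module.Finite ℤ R] (k : ℕ) (hk : 0 < k) : Finite ((S → R) ⧸ kV S R k) := by
  refine finite_of_surj_torsion (V := S → R) ((kV S R k).mkQ.toAddMonoidHom)
    (fun q => (kV S R k).mkQ_surjective q) k hk ?_
  intro x
  obtain ⟨y, rfl⟩ := (kV S R k).mkQ_surjective x
  rw [← map_nsmul, Submodule.mkQ_apply, Submodule.Quotient.mk_eq_zero]
  exact mem_kV.2 ⟨y, by ext i; simp⟩

theorem kV_avoid_one [Module.Finite ℤ R] (v : S → R) (hv : v ≠ 0) :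
    ∃ k : ℕ, 0 < k ∧ v ∉ kV S R k := by
  have : Module.Free ℤ (S → R) := inferInstance
  let b := Module.Free.chooseBasis ℤ (S → R)
  have h1 : b.repr v ≠ 0 := by simpa using hv
  obtain ⟨i, hi⟩ := Finsupp.ne_iff.1 h1
  simp only [Finsupp.coe_zero, Pi.zero_apply] at hi
  refine ⟨(b.repr v i).natAbs + 1, by omega, ?_⟩
  intro hmem
  obtain ⟨z, hz⟩ := mem_kV.1 hmem
  set n := (b.repr v i).natAbs + 1 with hn
  have hz' : (n : ℤ) • z = v := by rw [← hz]; ext i; simp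
  have h2 : b.repr v i = (n : ℤ) * b.repr z i := by
    rw [← hz', map_smul]; simp
  have h3 : (n : ℤ) ∣ b.repr v i := ⟨_, h2⟩
  have h4 := Int.natAbs_dvd_natAbs.2 h3
  have h5 := Nat.le_of_dvd (by omega) h4
  simp only [Int.natAbs_natCast] at h5
  omega

theorem kV_avoid [Module.Finite ℤ R] (F : Set (S → R)) (hF : F.Finite) (h0 : ∀ v ∈ F, v ≠ 0) :
    ∃ k : ℕ, 0 < k ∧ ∀ v ∈ F, v ∉ kV S R k := by
  induction F, hF using Set.Finite.induction_on with
  | empty => exact ⟨1, by norm_num, by simp⟩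
  | @insert a F ha hF ih =>
    obtain ⟨k, hk, h1⟩ := ih (fun v hv => h0 v (Set.mem_insert_of_mem _ hv))
    obtain ⟨k', hk', h2⟩ := kV_avoid_one a (h0 a (Set.mem_insert _ _))
    refine ⟨k * k', Nat.mul_pos hk hk', ?_⟩
    rintro v (rfl | hv) hmem
    · exact h2 (kV_mono (Dvd.intro_left _ rfl) hmem)
    · exact h1 v hv (kV_mono (Dvd.intro _ rfl) hmem)

/-- The congruence subgroup. -/
def congSub (S R : Type*) [CommRing R] (k : ℕ) : Subgroup ((S → R) ≃ₗ[R] (S → R)) where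
  carrier := {T | ∀ x, T x - x ∈ kV S R k}
  one_mem' := by intro x; simp
  mul_mem' := by
    intro T T' hT hT' x
    have := (kV S R k).add_mem (hT (T' x)) (hT' x)
    simpa using this
  inv_mem' := by
    intro T hT x
    have := (kV S R k).neg_mem (hT (T⁻¹ x))
    have h2 : T (T⁻¹ x) = x := LinearEquiv.apply_symm_apply T x
    rw [h2] at this
    simpa using this

/-- Action on the finite quotient. -/
def quotMap (S R : Type*) [CommRing R] (k : ℕ) :
    ((S → R) ≃ₗ[R] (S → R)) →* Module.End R ((S → R) ⧸ kV S R k) where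
  toFun T := (kV S R k).mapQ (kV S R k) (T : (S → R) →ₗ[R] (S → R)) (fun _ hx => kV_map _ hx)
  map_one' := by ext x; rfl
  map_mul' T T' := by ext x; rfl

theorem congSub_finiteIndex [Module.Finite ℤ R] (k : ℕ) (hk : 0 < k) {A : Type*} [Group A]
    (ρ : A →* ((S → R) ≃ₗ[R] (S → R))) : ((congSub S R k).comap ρ).FiniteIndex := by
  have := kV_finite (S := S) (R := R) k hk
  have hfinEnd : Finite (Module.End R ((S → R) ⧸ kV S R k)) :=
    Finite.of_injective (fun (f : Module.End R ((S → R) ⧸ kV S R k)) => (f : _ → _))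
      DFunLike.coe_injective
  let q := ((quotMap S R k).toHomUnits).comp ρ
  have hker : q.ker ≤ (congSub S R k).comap ρ := by
    intro a ha x
    have h1 : (quotMap S R k) (ρ a) = 1 := by
      have := congrArg Units.val (MonoidHom.mem_ker.1 ha)
      exact this
    have h2 := LinearMap.congr_fun h1 ((kV S R k).mkQ x)
    exact (Submodule.Quotient.eq _).1 h2
  have hq : q.ker.FiniteIndex := Subgroup.finiteIndex_ker q
  exact Subgroup.finiteIndex_of_le hker

end CongruenceFinite
end RInf

namespace RInf

set_option linter.unusedSectionVars false

section Colored

variable {S R : Type*} [CommRing R]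

/-- A vector is colored if it is congruent to plus or minus the base vector. -/
def Colored (k : ℕ) (v₀ x : S → R) : Prop := x - v₀ ∈ kV S R k ∨ x + v₀ ∈ kV S R k

theorem Colored.of_congr {k : ℕ} {v₀ x y : S → R} (h : Colored k v₀ x) (hxy : y - x ∈ kV S R k) :
    Colored k v₀ y := by
  rcases h with h | h
  · left; have := (kV S R k).add_mem h hxy; convert this using 1; abel
  · right; have := (kV S R k).add_mem h hxy; convert this using 1; abel

theorem Colored.neg {k : ℕ} {v₀ x : S → R} (h : Colored k v₀ x) : Colored k v₀ (-x) := by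
  rcases h with h | h
  · right; have := (kV S R k).neg_mem h; convert this using 1; abel
  · left; have := (kV S R k).neg_mem h; convert this using 1; abel

theorem Colored.base (k : ℕ) (v₀ : S → R) : Colored k v₀ v₀ := by
  left; simp

/-- Transformations preserving the base vector up to sign modulo `k`. -/
def Good (k : ℕ) (v₀ : S → R) (T : (S → R) ≃ₗ[R] (S → R)) : Prop := Colored k v₀ (T v₀)

theorem Good.colored {k : ℕ} {v₀ : S → R} {T : (S → R) ≃ₗ[R] (S → R)} (hT : Good k v₀ T)
    {x : S → R} (hx : Colored k v₀ x) : Colored k v₀ (T x) := by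
  rcases hx with h | h
  · have := kV_map (T : (S → R) →ₗ[R] (S → R)) h
    rw [map_sub] at this
    exact Colored.of_congr hT this
  · have := kV_map (T : (S → R) →ₗ[R] (S → R)) h
    rw [map_add, ← sub_neg_eq_add] at this
    exact Colored.of_congr (Colored.neg hT) this

theorem Good.one (k : ℕ) (v₀ : S → R) : Good k v₀ 1 := Colored.base k v₀

theorem Good.mul {k : ℕ} {v₀ : S → R} {T T' : (S → R) ≃ₗ[R] (S → R)} (hT : Good k v₀ T)
    (hT' : Good k v₀ T') : Good k v₀ (T * T') := hT.colored hT'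

theorem Good.inv {k : ℕ} {v₀ : S → R} {T : (S → R) ≃ₗ[R] (S → R)} (hT : Good k v₀ T) :
    Good k v₀ T⁻¹ := by
  have h0 : T⁻¹ (T v₀) = v₀ := LinearEquiv.symm_apply_apply T v₀
  unfold Good
  rcases hT with h | h
  · have := (kV S R k).neg_mem (kV_map ((T⁻¹ : (S → R) ≃ₗ[R] (S → R)) : (S → R) →ₗ[R] (S → R)) h)
    left
    convert this using 1
    rw [map_sub]
    change _ = - (T⁻¹ (T v₀) - T⁻¹ v₀)
    rw [h0]; abel
  · have := (kV_map ((T⁻¹ : (S → R) ≃ₗ[R] (S → R)) : (S → R) →ₗ[R] (S → R)) h)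
    right
    convert this using 1
    rw [map_add]
    change _ = (T⁻¹ (T v₀) + T⁻¹ v₀)
    rw [h0]; abel

theorem Good.colored_iff {k : ℕ} {v₀ : S → R} {T : (S → R) ≃ₗ[R] (S → R)} (hT : Good k v₀ T)
    {x : S → R} : Colored k v₀ (T x) ↔ Colored k v₀ x := by
  refine ⟨fun h => ?_, hT.colored⟩
  have := hT.inv.colored h
  have h0 : T⁻¹ (T x) = x := LinearEquiv.symm_apply_apply T x
  rwa [h0] at this

/-- If a transformation negates a colored vector then it is good. -/
theorem good_of_neg {k : ℕ} {v₀ x : S → R} {T : (S → R) ≃ₗ[R] (S → R)} (hx : Colored k v₀ x)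
    (hT : T x = - x) : Good k v₀ T := by
  unfold Good
  have hx' := hx.neg
  rw [← hT] at hx'
  rcases hx with h | h
  · refine Colored.of_congr hx' ?_
    rw [← map_sub]
    apply kV_map (T : (S → R) →ₗ[R] (S → R))
    have := (kV S R k).neg_mem h; convert this using 1; abel
  · have h2 := hx'.neg
    refine Colored.of_congr h2 ?_
    rw [sub_neg_eq_add, ← map_add]
    apply kV_map (T : (S → R) →ₗ[R] (S → R))
    convert h using 1; abel

open Classical in
/-- The label of a vector. -/
noncomputable def lab (k k' : ℕ) (v₀ x : S → R) : FreeGroup ((S → R) ⧸ kV S R k') :=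
  if Colored k v₀ x then FreeGroup.of ((kV S R k').mkQ x) else 1

theorem lab_colored {k k' : ℕ} {v₀ x : S → R} (h : Colored k v₀ x) :
    lab k k' v₀ x = FreeGroup.of ((kV S R k').mkQ x) := if_pos h

theorem lab_uncolored {k k' : ℕ} {v₀ x : S → R} (h : ¬ Colored k v₀ x) :
    lab k k' v₀ x = 1 := if_neg h

theorem lab_congr {k k' : ℕ} (hk : k ∣ k') {v₀ x y : S → R} (h : x - y ∈ kV S R k') :
    lab k k' v₀ x = lab k k' v₀ y := by
  have h' := kV_mono hk h
  by_cases hx : Colored k v₀ x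
  · have hy : Colored k v₀ y := hx.of_congr (by rw [← neg_sub]; exact (kV S R k).neg_mem h')
    rw [lab_colored hx, lab_colored hy]
    congr 1
    exact (Submodule.Quotient.eq _).2 h
  · have hy : ¬ Colored k v₀ y := fun hy => hx (hy.of_congr h')
    rw [lab_uncolored hx, lab_uncolored hy]

end Colored

theorem positive_inj {D : Type*} (L L' : List D)
    (h : (L.map FreeGroup.of).prod = (L'.map FreeGroup.of).prod) : L = L' := by
  classical
  have h1 : ∀ L : List D, (L.map FreeGroup.of).prod = FreeGroup.mk (L.map (fun d => (d, true))) := by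
    intro L
    induction L with
    | nil => rfl
    | cons a L ih =>
      rw [List.map_cons, List.prod_cons, ih]
      rfl
  have h2 : ∀ L : List D, (FreeGroup.mk (L.map (fun d => (d, true)))).toWord =
      L.map (fun d => (d, true)) := by
    intro L
    rw [FreeGroup.toWord_mk]
    apply FreeGroup.IsReduced.reduce_eq
    unfold FreeGroup.IsReduced
    rw [List.isChain_map]
    induction L with
    | nil => exact List.IsChain.nil
    | cons a L ih =>
      rw [List.isChain_cons]
      exact ⟨by simp, ih⟩
  have h3 := h2 L
  rw [← h1, h, h1, h2] at h3
  have h4 := congrArg (List.map Prod.fst) h3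
  simpa [Function.comp_def] using h4.symm

end RInf

namespace RInf

set_option linter.unusedSectionVars false

section Region

variable {S R : Type*} [Fintype S] [DecidableEq S] [CommRing R] [LinearOrder R]
  [IsStrictOrderedRing R] {M : S → S → ℕ} (X : Cx S R M)

/-- The modulus `k` separates all the roots of each dihedral subsystem. -/
def Cx.Sep (k : ℕ) : Prop :=
  ∀ s t, s ≠ t → 2 ≤ M s t → ∀ i j, i < j → j < M s t →
    gam (X.c s t) s t i - gam (X.c s t) s t j ∉ kV S R k ∧
    gam (X.c s t) s t i + gam (X.c s t) s t j ∉ kV S R k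

theorem Cx.exists_sep [Module.Finite ℤ R] : ∃ k, 0 < k ∧ X.Sep k := by
  classical
  let B := ∑ s, ∑ t, M s t
  have hB : ∀ s t, M s t ≤ B := fun s t =>
    (Finset.single_le_sum (f := fun t => M s t) (fun _ _ => Nat.zero_le _) (Finset.mem_univ t)).trans
      (Finset.single_le_sum (f := fun s => ∑ t, M s t) (fun _ _ => Nat.zero_le _)
        (Finset.mem_univ s))
  let F0 : Set (S → R) := Set.range (fun p : S × S × Fin B × Fin B =>
    gam (X.c p.1 p.2.1) p.1 p.2.1 p.2.2.1 - gam (X.c p.1 p.2.1) p.1 p.2.1 p.2.2.2) ∪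
    Set.range (fun p : S × S × Fin B × Fin B =>
    gam (X.c p.1 p.2.1) p.1 p.2.1 p.2.2.1 + gam (X.c p.1 p.2.1) p.1 p.2.1 p.2.2.2)
  have hF0 : F0.Finite := (Set.finite_range _).union (Set.finite_range _)
  obtain ⟨k, hk, h⟩ := kV_avoid (F0 \ {0}) (hF0.subset Set.sdiff_subset) (fun v hv => hv.2)
  refine ⟨k, hk, fun s t hst hm i j hij hj => ⟨h _ ⟨Or.inl ?_, ?_⟩, h _ ⟨Or.inr ?_, ?_⟩⟩⟩
  · exact ⟨(s, t, ⟨i, (hij.trans hj).trans_le (hB s t)⟩, ⟨j, hj.trans_le (hB s t)⟩), rfl⟩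
  · exact X.gam_sub_ne hst hm hij hj
  · exact ⟨(s, t, ⟨i, (hij.trans hj).trans_le (hB s t)⟩, ⟨j, hj.trans_le (hB s t)⟩), rfl⟩
  · exact X.gam_add_ne hst hm hij hj

theorem kV_cancel {k : ℕ} (T : (S → R) ≃ₗ[R] (S → R)) {x : S → R} (h : T x ∈ kV S R k) :
    x ∈ kV S R k := by
  have := kV_map (T.symm : (S → R) →ₗ[R] (S → R)) h
  simpa using this

theorem Colored.sub_or_add {k : ℕ} {v₀ x y : S → R} (hx : Colored k v₀ x) (hy : Colored k v₀ y) :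
    x - y ∈ kV S R k ∨ x + y ∈ kV S R k := by
  rcases hx with hx | hx <;> rcases hy with hy | hy
  · left; convert (kV S R k).sub_mem hx hy using 1; abel
  · right; convert (kV S R k).add_mem hx hy using 1; abel
  · right; convert (kV S R k).add_mem hx hy using 1; abel
  · left; convert (kV S R k).sub_mem hx hy using 1; abel

theorem Cx.compat {k : ℕ} (hk : X.Sep k) (k' : ℕ) (v₀ : S → R) : X.Compat (lab k k' v₀) := by
  intro T s t hst hm i j hij hj
  by_contra hcon
  rw [not_or] at hcon
  have h1 : Colored k v₀ (T (gam (X.c s t) s t i)) := by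
    by_contra h; exact hcon.1 (lab_uncolored h)
  have h2 : Colored k v₀ (T (gam (X.c s t) s t j)) := by
    by_contra h; exact hcon.2 (lab_uncolored h)
  rcases h1.sub_or_add h2 with h | h
  · rw [← map_sub] at h
    exact (hk s t hst hm i j hij hj).1 (kV_cancel T h)
  · rw [← map_add] at h
    exact (hk s t hst hm i j hij hj).2 (kV_cancel T h)

theorem artin_induction {p : ArtinGroup M → Prop} (h1 : p 1) (hm : ∀ w s, p w → p (w * artinGen M s))
    (hi : ∀ w s, p w → p (w * (artinGen M s)⁻¹)) (w : ArtinGroup M) : p w := by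
  have hw : w ∈ Subgroup.closure (Set.range (artinGen M)) := by
    have : Subgroup.closure (Set.range (artinGen M)) = ⊤ := PresentedGroup.closure_range_of _
    rw [this]; trivial
  induction hw using Subgroup.closure_induction_right with
  | one => exact h1
  | mul_right x hx y hy ih => obtain ⟨s, rfl⟩ := hy; exact hm _ _ ih
  | mul_inv_cancel x hx y hy ih => obtain ⟨s, rfl⟩ := hy; exact hi _ _ ih

theorem Cx.kap_congr {k : ℕ} (hk : X.Sep k) {k' : ℕ} (hkk : k ∣ k') (v₀ : S → R)
    (w : ArtinGroup M) : ∀ T T' : (S → R) ≃ₗ[R] (S → R), (∀ x, T x - T' x ∈ kV S R k') →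
    X.kap (lab k k' v₀) (X.compat hk k' v₀) T w = X.kap (lab k k' v₀) (X.compat hk k' v₀) T' w := by
  induction w using artin_induction with
  | h1 => intro T T' _; rw [X.kap_one, X.kap_one]
  | hm w s ih =>
    intro T T' h
    rw [X.kap_mul, X.kap_mul, ih T T' h, X.kap_gen, X.kap_gen]
    congr 1
    exact lab_congr hkk (h (X.rho w (eb R s)))
  | hi w s ih =>
    intro T T' h
    rw [X.kap_mul, X.kap_mul, ih T T' h, X.kap_inv, X.kap_inv, X.kap_gen, X.kap_gen]
    congr 2
    exact lab_congr hkk (h (X.rho w ((X.rho (artinGen M s))⁻¹ (eb R s))))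

/-- The homomorphism to a free group on the congruence subgroup. -/
noncomputable def Cx.fhom {k : ℕ} (hk : X.Sep k) {k' : ℕ} (hkk : k ∣ k') (v₀ : S → R) :
    ((congSub S R k').comap X.rho) →* FreeGroup ((S → R) ⧸ kV S R k') where
  toFun w := X.kap (lab k k' v₀) (X.compat hk k' v₀) 1 w.1
  map_one' := X.kap_one _ _ _
  map_mul' w w' := by
    change X.kap _ _ 1 (w.1 * w'.1) = _
    rw [X.kap_mul]
    congr 1
    apply X.kap_congr hk hkk
    intro x
    exact w.2 x

/-- The uncolored region around the identity. -/
inductive Cx.Reg (k : ℕ) (v₀ : S → R) : ArtinGroup M → Prop where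
  | one : Cx.Reg k v₀ 1
  | step (g : ArtinGroup M) (s : S) (hg : Cx.Reg k v₀ g) (h : ¬ Colored k v₀ (X.rho g (eb R s))) :
      Cx.Reg k v₀ (g * artinGen M s)

theorem Cx.kap_reg {k : ℕ} (hk : X.Sep k) (k' : ℕ) (v₀ : S → R)
    {T : (S → R) ≃ₗ[R] (S → R)} (hT : Good k v₀ T) {g : ArtinGroup M} (hg : X.Reg k v₀ g) :
    X.kap (lab k k' v₀) (X.compat hk k' v₀) T g = 1 := by
  induction hg with
  | one => exact X.kap_one _ _ _
  | step g s hg h ih =>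
    rw [X.kap_mul, ih, X.kap_gen, one_mul]
    apply lab_uncolored
    intro hc
    exact h (hT.colored_iff.1 hc)

/-- The wall elements. -/
def wall (M : S → S → ℕ) (g : ArtinGroup M) (s : S) : ArtinGroup M := g * artinGen M s * g⁻¹

theorem Cx.rho_wall (g : ArtinGroup M) (s : S) :
    X.rho (wall M g s) (X.rho g (eb R s)) = - X.rho g (eb R s) := by
  unfold wall
  rw [map_mul, map_mul, map_inv, X.rho_gen]
  change X.rho g (X.refl s ((X.rho g).symm (X.rho g (eb R s)))) = _
  rw [LinearEquiv.symm_apply_apply, X.refl_self, map_neg]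

theorem Cx.kap_wall {k : ℕ} (hk : X.Sep k) (k' : ℕ) (v₀ : S → R)
    {T : (S → R) ≃ₗ[R] (S → R)} (hT : Good k v₀ T) {g : ArtinGroup M} (hg : X.Reg k v₀ g)
    {s : S} (hc : Colored k v₀ (X.rho g (eb R s))) :
    X.kap (lab k k' v₀) (X.compat hk k' v₀) T (wall M g s) =
      FreeGroup.of ((kV S R k').mkQ (T (X.rho g (eb R s)))) := by
  have hG : Good k v₀ (X.rho (wall M g s)) := good_of_neg hc (X.rho_wall g s)
  have e : T * X.rho (g * artinGen M s) * (X.rho g)⁻¹ = T * X.rho (wall M g s) := by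
    simp [wall, mul_assoc]
  unfold wall
  rw [X.kap_mul, X.kap_inv, e, X.kap_reg hk k' v₀ (hT.mul hG) hg, X.kap_mul,
    X.kap_reg hk k' v₀ hT hg, X.kap_gen, inv_one, mul_one, one_mul]
  exact lab_colored (hT.colored hc)

theorem Cx.kap_wall_pow {k : ℕ} (hk : X.Sep k) (k' : ℕ) (v₀ : S → R)
    {g : ArtinGroup M} (hg : X.Reg k v₀ g)
    {s : S} (hc : Colored k v₀ (X.rho g (eb R s))) (n : ℕ) :
    ∀ T : (S → R) ≃ₗ[R] (S → R), Good k v₀ T → ∃ L : List ((S → R) ⧸ kV S R k'),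
      X.kap (lab k k' v₀) (X.compat hk k' v₀) T (wall M g s ^ n) = (L.map FreeGroup.of).prod := by
  have hG : Good k v₀ (X.rho (wall M g s)) := good_of_neg hc (X.rho_wall g s)
  induction n with
  | zero => intro T _; exact ⟨[], by rw [pow_zero, X.kap_one]; rfl⟩
  | succ n ih =>
    intro T hT
    obtain ⟨L, hL⟩ := ih _ (hT.mul hG)
    refine ⟨(kV S R k').mkQ (T (X.rho g (eb R s))) :: L, ?_⟩
    rw [pow_succ', X.kap_mul, X.kap_wall hk k' v₀ hT hg hc, hL, List.map_cons, List.prod_cons]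

theorem Cx.kap_wall_pow_one {k : ℕ} (hk : X.Sep k) (k' : ℕ) (v₀ : S → R)
    {g : ArtinGroup M} (hg : X.Reg k v₀ g)
    {s : S} (hc : Colored k v₀ (X.rho g (eb R s))) (n : ℕ) (hn : 0 < n) :
    ∃ L : List ((S → R) ⧸ kV S R k'),
      X.kap (lab k k' v₀) (X.compat hk k' v₀) 1 (wall M g s ^ n) =
        (((kV S R k').mkQ (X.rho g (eb R s)) :: L).map FreeGroup.of).prod := by
  have hG : Good k v₀ (X.rho (wall M g s)) := good_of_neg hc (X.rho_wall g s)
  obtain ⟨m, rfl⟩ := Nat.exists_eq_succ_of_ne_zero hn.ne'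
  obtain ⟨L, hL⟩ := X.kap_wall_pow hk k' v₀ hg hc m _ ((Good.one k v₀).mul hG)
  refine ⟨L, ?_⟩
  rw [pow_succ', X.kap_mul, X.kap_wall hk k' v₀ (Good.one k v₀) hg hc, hL, List.map_cons,
    List.prod_cons]
  rfl

/-- Every element factors through the region modulo the wall reflections. -/
theorem Cx.exists_factor (k : ℕ) (v₀ : S → R) (h : ArtinGroup M) :
    ∃ δ ∈ Subgroup.closure {T : (S → R) ≃ₗ[R] (S → R) | ∃ g s, X.Reg k v₀ g ∧
      Colored k v₀ (X.rho g (eb R s)) ∧ T = X.rho (wall M g s)},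
      ∃ g, X.Reg k v₀ g ∧ X.rho h = δ * X.rho g := by
  have step : ∀ (w : ArtinGroup M) (s : S), (∃ δ ∈ Subgroup.closure {T : (S → R) ≃ₗ[R] (S → R) |
      ∃ g s, X.Reg k v₀ g ∧ Colored k v₀ (X.rho g (eb R s)) ∧ T = X.rho (wall M g s)},
      ∃ g, X.Reg k v₀ g ∧ X.rho w = δ * X.rho g) → (∃ δ ∈ Subgroup.closure
      {T : (S → R) ≃ₗ[R] (S → R) |
      ∃ g s, X.Reg k v₀ g ∧ Colored k v₀ (X.rho g (eb R s)) ∧ T = X.rho (wall M g s)},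
      ∃ g, X.Reg k v₀ g ∧ X.rho (w * artinGen M s) = δ * X.rho g) := by
    rintro w s ⟨δ, hδ, g, hg, e⟩
    by_cases hc : Colored k v₀ (X.rho g (eb R s))
    · refine ⟨δ * X.rho (wall M g s), mul_mem hδ (Subgroup.subset_closure ⟨g, s, hg, hc, rfl⟩),
        g, hg, ?_⟩
      simp only [wall, map_mul, map_inv, e]
      group
    · refine ⟨δ, hδ, g * artinGen M s, .step g s hg hc, ?_⟩
      rw [map_mul, map_mul, e, mul_assoc]
  induction h using artin_induction with
  | h1 => exact ⟨1, one_mem _, 1, .one, by simp⟩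
  | hm w s ih => exact step w s ih
  | hi w s ih =>
    have := step w s ih
    rwa [map_mul, X.rho_gen, ← X.refl_inv, ← X.rho_gen, ← map_inv, ← map_mul] at this

end Region
end RInf

namespace RInf

set_option linter.unusedSectionVars false

section Walls

variable {S R : Type*} [Fintype S] [DecidableEq S] [CommRing R] [LinearOrder R]
  [IsStrictOrderedRing R] {M : S → S → ℕ} (X : Cx S R M)

/-- The hyperbolic (or parabolic) element. -/
def Cx.hyp (_X : Cx S R M) (s t u : S) : ArtinGroup M :=
  artinGen M s * (artinGen M t * artinGen M u * artinGen M t)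

theorem Cx.hyp_apply {s t u : S} (hst : s ≠ t) (hsu : s ≠ u) (htu : t ≠ u) (x y : R) :
    X.rho (X.hyp s t u) (x • eb R s + y • (eb R u + X.c t u • eb R t)) =
      (((X.c s u + X.c t u * X.c s t) ^ 2 - 1) * x - (X.c s u + X.c t u * X.c s t) * y) • eb R s +
      ((X.c s u + X.c t u * X.c s t) * x - y) • (eb R u + X.c t u • eb R t) := by
  simp only [Cx.hyp, map_mul, X.rho_gen, LinearEquiv.mul_apply, map_add, map_smul, X.refl_self,
    X.refl_other hst, X.refl_other hst.symm, X.refl_other hsu, X.refl_other hsu.symm,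
    X.refl_other htu, X.refl_other htu.symm, map_neg]
  rw [X.symm t s, X.symm u s, X.symm u t]
  module

theorem Cx.hyp_pow {s t u : S} (hst : s ≠ t) (hsu : s ≠ u) (htu : t ≠ u) (n : ℕ) :
    ∃ x y : R, y < x ∧ 0 ≤ y ∧ (0 < n → 0 < y) ∧ X.rho (X.hyp s t u ^ n) (eb R s) =
      x • eb R s + y • (eb R u + X.c t u • eb R t) := by
  induction n with
  | zero => exact ⟨1, 0, one_pos, le_rfl, fun h => absurd h (lt_irrefl _), by simp⟩
  | succ n ih =>
    obtain ⟨x, y, hxy, hy, -, e⟩ := ih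
    have h1 := X.ge1 s t hst
    have h2 := X.ge1 s u hsu
    have h3 := X.ge1 t u htu
    have hb : 2 ≤ X.c s u + X.c t u * X.c s t := by nlinarith
    have hn : X.rho (X.hyp s t u ^ (n + 1)) (eb R s) =
        X.rho (X.hyp s t u) (X.rho (X.hyp s t u ^ n) (eb R s)) := by
      rw [pow_succ', map_mul]; rfl
    rw [e, X.hyp_apply hst hsu htu] at hn
    generalize X.c s u + X.c t u * X.c s t = b at hb hn
    have hx : 0 < x := hy.trans_lt hxy
    have hy' : x < b * x - y := by nlinarith
    refine ⟨_, _, ?_, ?_, ?_, hn⟩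
    · nlinarith
    · linarith
    · intro _; linarith

theorem Cx.exists_walls [Module.Finite ℤ R] {s t u : S} (hst : s ≠ t) (hsu : s ≠ u) (htu : t ≠ u)
    (k : ℕ) (hk : 0 < k) : ∃ g₁ s₁ g₂ s₂, X.Reg k (eb R s) g₁ ∧ X.Reg k (eb R s) g₂ ∧
      Colored k (eb R s) (X.rho g₁ (eb R s₁)) ∧ Colored k (eb R s) (X.rho g₂ (eb R s₂)) ∧
      X.rho g₁ (eb R s₁) - X.rho g₂ (eb R s₂) ≠ 0 := by
  by_contra hcon
  have hall : ∀ g s', X.Reg k (eb R s) g → Colored k (eb R s) (X.rho g (eb R s')) →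
      X.rho g (eb R s') = eb R s := by
    intro g s' hg hc
    by_contra hne
    refine hcon ⟨g, s', 1, s, hg, .one, hc, ?_, ?_⟩
    · rw [map_one]; exact Colored.base _ _
    · rw [map_one, sub_ne_zero]; exact hne
  have hpm : ∀ h s', Colored k (eb R s) (X.rho h (eb R s')) →
      X.rho h (eb R s') = eb R s ∨ X.rho h (eb R s') = - eb R s := by
    intro h s' hc
    obtain ⟨δ, hδ, g, hg, e⟩ := X.exists_factor k (eb R s) h
    have hδ' : δ (eb R s) = eb R s ∨ δ (eb R s) = - eb R s := by
      clear e
      induction hδ using Subgroup.closure_induction with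
      | mem T hT =>
        obtain ⟨g, s', hg, hc, rfl⟩ := hT
        right
        have := X.rho_wall g s'
        rwa [hall g s' hg hc] at this
      | one => left; rfl
      | mul T T' _ _ h1 h2 =>
        rw [LinearEquiv.mul_apply]
        rcases h2 with h2 | h2 <;> rcases h1 with h1 | h1 <;> simp [h2, h1]
      | inv T _ h1 =>
        have h0 : T⁻¹ (T (eb R s)) = eb R s := LinearEquiv.symm_apply_apply T _
        rcases h1 with h1 | h1
        · left; rwa [h1] at h0
        · right; rw [h1, map_neg] at h0; exact neg_eq_iff_eq_neg.1 h0
    have hg' : X.rho h (eb R s') = δ (X.rho g (eb R s')) := by rw [e]; rfl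
    have hG : Good k (eb R s) δ := by
      unfold Good
      rcases hδ' with h1 | h1
      · rw [h1]; exact Colored.base _ _
      · rw [h1]; exact (Colored.base _ _).neg
    rw [hg'] at hc ⊢
    rw [hall g s' hg (hG.colored_iff.1 hc)]
    exact hδ'
  have hfi := congSub_finiteIndex (S := S) (R := R) k hk X.rho
  obtain ⟨N, hN, -, hmem⟩ := Subgroup.exists_pow_mem_of_index_ne_zero hfi.index_ne_zero
    (X.hyp s t u)
  obtain ⟨x, y, -, -, hy, e⟩ := X.hyp_pow hst hsu htu N
  have hc : Colored k (eb R s) (X.rho (X.hyp s t u ^ N) (eb R s)) := Or.inl (hmem (eb R s))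
  have h3 := X.ge1 t u htu
  have hpos : 0 < y * X.c t u := mul_pos (hy hN) (by linarith)
  rcases hpm _ _ hc with h | h
  · rw [e] at h
    have := congrFun h t
    simp [eb_apply, hst.symm, htu] at this
    rcases this with h | h
    · exact (hy hN).ne' h
    · rw [h] at h3; linarith
  · rw [e] at h
    have := congrFun h t
    simp [eb_apply, hst.symm, htu] at this
    rcases this with h | h
    · exact (hy hN).ne' h
    · rw [h] at h3; linarith

theorem artin_fg : Group.FG (ArtinGroup M) := by
  rw [Group.fg_iff]
  exact ⟨Set.range (artinGen M), PresentedGroup.closure_range_of _, Set.finite_range _⟩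

theorem Cx.rInf (X : Cx S R M) [Module.Finite ℤ R] {s t u : S} (hst : s ≠ t) (hsu : s ≠ u) (htu : t ≠ u) :
    PropertyRInfinity (ArtinGroup M) := by
  obtain ⟨k, hk, hsep⟩ := X.exists_sep
  obtain ⟨g₁, s₁, g₂, s₂, h1, h2, c1, c2, hne⟩ := X.exists_walls hst hsu htu k hk
  obtain ⟨k1, hk1, hav⟩ := kV_avoid_one _ hne
  have hkk : k ∣ k * k1 := Dvd.intro _ rfl
  have := congSub_finiteIndex (S := S) (R := R) (k * k1) (Nat.mul_pos hk hk1) X.rho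
  have := artin_fg (M := M)
  refine large_rInfinity _ (X.fhom hsep hkk (eb R s)) (wall M g₁ s₁) (wall M g₂ s₂) ?_
  intro N hN ha hb heq
  obtain ⟨L1, e1⟩ := X.kap_wall_pow_one hsep (k * k1) (eb R s) h1 c1 N hN
  obtain ⟨L2, e2⟩ := X.kap_wall_pow_one hsep (k * k1) (eb R s) h2 c2 N hN
  change X.kap _ _ 1 (wall M g₁ s₁ ^ N) * X.kap _ _ 1 (wall M g₂ s₂ ^ N) =
    X.kap _ _ 1 (wall M g₂ s₂ ^ N) * X.kap _ _ 1 (wall M g₁ s₁ ^ N) at heq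
  rw [e1, e2, ← List.prod_append, ← List.prod_append, ← List.map_append, ← List.map_append] at heq
  have h := positive_inj _ _ heq
  rw [List.cons_append, List.cons_append, List.cons.injEq] at h
  have h' := (Submodule.Quotient.eq _).1 h.1
  exact hav (kV_mono (Dvd.intro_left _ rfl) h')

end Walls
end RInf

namespace RInf

theorem aSeq_sin (θ : ℝ) (j : ℕ) :
    aSeq (2 * Real.cos θ) j * Real.sin θ = Real.sin (j * θ) ∧
    aSeq (2 * Real.cos θ) (j + 1) * Real.sin θ = Real.sin ((j + 1 : ℕ) * θ) := by
  induction j with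
  | zero => simp [aSeq_zero, aSeq_one]
  | succ j ih =>
    refine ⟨ih.2, ?_⟩
    rw [aSeq_add_two, sub_mul, mul_assoc, ih.2, ih.1]
    have e1 : ((j : ℕ) : ℝ) * θ = ((j + 1 : ℕ) : ℝ) * θ - θ := by push_cast; ring
    have e2 : ((j + 1 + 1 : ℕ) : ℝ) * θ = ((j + 1 : ℕ) : ℝ) * θ + θ := by push_cast; ring
    rw [e1, e2, Real.sin_sub, Real.sin_add]
    ring

theorem aSeq_map {R : Type*} [CommRing R] (f : R →+* ℝ) (c : R) (j : ℕ) :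
    f (aSeq c j) = aSeq (f c) j ∧ f (aSeq c (j + 1)) = aSeq (f c) (j + 1) := by
  induction j with
  | zero => simp [aSeq_zero, aSeq_one]
  | succ j ih =>
    refine ⟨ih.2, ?_⟩
    rw [aSeq_add_two, aSeq_add_two, map_sub, map_mul, ih.1, ih.2]

theorem theta_facts {m : ℕ} (hm : 2 ≤ m) :
    aSeq (2 * Real.cos (Real.pi / m)) m = 0 ∧ aSeq (2 * Real.cos (Real.pi / m)) (m - 1) = 1 ∧
    ∀ j, 0 < j → j < m → 0 < aSeq (2 * Real.cos (Real.pi / m)) j := by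
  have hm' : (2 : ℝ) ≤ m := by exact_mod_cast hm
  have hm0 : (0 : ℝ) < m := by linarith
  have hpi := Real.pi_pos
  have hth : 0 < Real.pi / m := by positivity
  have hlt : Real.pi / m < Real.pi := by
    rw [div_lt_iff₀ hm0]; nlinarith
  have hs : 0 < Real.sin (Real.pi / m) := Real.sin_pos_of_pos_of_lt_pi hth hlt
  have hmul : (m : ℝ) * (Real.pi / m) = Real.pi := by field_simp
  refine ⟨?_, ?_, ?_⟩
  · have h := (aSeq_sin (Real.pi / m) m).1
    rw [hmul, Real.sin_pi] at h
    exact (mul_eq_zero.1 h).resolve_right hs.ne'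
  · have h := (aSeq_sin (Real.pi / m) (m - 1)).1
    have e : ((m - 1 : ℕ) : ℝ) * (Real.pi / m) = Real.pi - Real.pi / m := by
      rw [Nat.cast_sub (by omega), sub_mul, hmul]; simp
    rw [e, Real.sin_pi_sub] at h
    exact mul_right_cancel₀ hs.ne' (by rw [h, one_mul])
  · intro j hj hjm
    have h := (aSeq_sin (Real.pi / m) j).1
    have hj' : (0 : ℝ) < j := by exact_mod_cast hj
    have hjm' : (j : ℝ) < m := by exact_mod_cast hjm
    have : 0 < Real.sin (j * (Real.pi / m)) := by
      apply Real.sin_pos_of_pos_of_lt_pi (by positivity)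
      calc (j : ℝ) * (Real.pi / m) < m * (Real.pi / m) := by gcongr
        _ = Real.pi := hmul
    rw [← h] at this
    exact (pos_iff_pos_of_mul_pos this).2 hs

/-- The real numbers of the geometric representation. -/
noncomputable def cReal {S : Type*} (M : S → S → ℕ) (s t : S) : ℝ :=
  if M s t = 0 then 2 else 2 * Real.cos (Real.pi / M s t)

theorem cReal_integral {S : Type*} (M : S → S → ℕ) (s t : S) : IsIntegral ℤ (cReal M s t) := by
  unfold cReal
  split_ifs
  · exact isIntegral_algebraMap (R := ℤ) (x := 2)
  · have := Real.isIntegral_two_mul_cos_rat_mul_pi (1 / (M s t : ℚ))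
    convert this using 3
    push_cast; ring

theorem cReal_ge {S : Type*} (M : S → S → ℕ) {s t : S} (h : M s t = 0 ∨ 3 ≤ M s t) :
    1 ≤ cReal M s t := by
  unfold cReal
  split_ifs with h0
  · norm_num
  · have h3 : 3 ≤ M s t := h.resolve_left h0
    have h3' : (3 : ℝ) ≤ M s t := by exact_mod_cast h3
    have hpi := Real.pi_pos
    have : Real.cos (Real.pi / 3) ≤ Real.cos (Real.pi / M s t) := by
      apply Real.cos_le_cos_of_nonneg_of_le_pi
      · positivity
      · linarith
      · gcongr
    rw [Real.cos_pi_div_three] at this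
    linarith

/-- The coefficient ring. -/
noncomputable abbrev cRing {S : Type*} (M : S → S → ℕ) : Subalgebra ℤ ℝ :=
  Algebra.adjoin ℤ (Set.range (fun p : S × S => cReal M p.1 p.2))

theorem cRing_finite {S : Type*} [Fintype S] (M : S → S → ℕ) : Module.Finite ℤ (cRing M) := by
  have h : (Subalgebra.toSubmodule (cRing M)).FG := by
    apply fg_adjoin_of_finite (Set.finite_range _)
    rintro _ ⟨p, rfl⟩
    exact cReal_integral M p.1 p.2
  exact Module.Finite.iff_fg.2 h

/-- The data of the geometric representation. -/
noncomputable def cData {S : Type*} (M : S → S → ℕ) (hsymm : ∀ s t, M s t = M t s)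
    (hlarge : ∀ s t : S, s ≠ t → M s t = 0 ∨ 3 ≤ M s t) : Cx S (cRing M) M where
  c s t := ⟨cReal M s t, Algebra.subset_adjoin ⟨(s, t), rfl⟩⟩
  symm s t := by
    apply Subtype.ext
    simp only [cReal, hsymm s t]
  ge1 s t h := cReal_ge M (hlarge s t h)
  a_top s t h hm := by
    apply Subtype.ext
    change (cRing M).val.toRingHom _ = _
    rw [(aSeq_map _ _ _).1]
    change aSeq (cReal M s t) (M s t) = 0
    rw [cReal, if_neg (by omega)]
    exact (theta_facts hm).1
  a_pred s t h hm := by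
    apply Subtype.ext
    change (cRing M).val.toRingHom _ = _
    rw [(aSeq_map _ _ _).1]
    change aSeq (cReal M s t) (M s t - 1) = 1
    rw [cReal, if_neg (by omega)]
    exact (theta_facts hm).2.1
  a_pos s t h hm j hj hjm := by
    change (0 : ℝ) < (cRing M).val.toRingHom _
    rw [(aSeq_map _ _ _).1]
    change 0 < aSeq (cReal M s t) j
    rw [cReal, if_neg (by omega)]
    exact (theta_facts hm).2.2 j hj hjm

theorem main {S : Type*} [Fintype S] (hcard : 3 ≤ Fintype.card S)
    (M : S → S → ℕ) (hsymm : ∀ s t, M s t = M t s)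
    (hlarge : ∀ s t : S, s ≠ t → M s t = 0 ∨ 3 ≤ M s t) : PropertyRInfinity (ArtinGroup M) := by
  classical
  obtain ⟨s, t, u, hst, hsu, htu⟩ := Fintype.two_lt_card_iff.1 hcard
  have := cRing_finite M
  exact (cData M hsymm hlarge).rInf hst hsu htu

end RInf

/-- A large-type, hyperbolic-type Artin group (on at least 3 generators) whose presentation
graph admits a twistless hierarchy terminating in twistless stars has property `R_∞`. -/
theorem largeType_hyperbolicType_twistlessHierarchy_propertyRInfinity
    {S : Type*} [Fintype S] (hcard : 3 ≤ Fintype.card S)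
    (M : S → S → ℕ) (hM : IsCoxeterMatrix M)
    (hlarge : ∀ s t : S, s ≠ t → M s t = 0 ∨ 3 ≤ M s t)
    (hhyp : ¬ ∃ s t u : S, s ≠ t ∧ t ≠ u ∧ s ≠ u ∧ M s t = 3 ∧ M t u = 3 ∧ M s u = 3)
    (hhier : AdmitsTwistlessHierarchy (presGraph M) Set.univ) :
    PropertyRInfinity (ArtinGroup M) := by
  exact RInf.main hcard M hM.1 hlarge
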